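/- arXiv:1603.02319 — 3 statements merged into one kernel-verified Lean document; each statement's English description precedes it below -/
import Mathlib

section
/- Let f:(ℝ,0)→(ℝ^{2n},0) be a quasi-homogeneous curve-germ, i.e. A-equivalent to a monomial curve t↦(t^{μ_1},…,t^{μ_k},0,…,0) for some positive integers μ_1<…<μ_k linearly independent over non-negative integers. Let ω_0 and ω_1 be germs of symplectic forms on ℝ^{2n} (smooth 2-forms defined near 0, closed near 0, and pointwise non-degenerate near 0) that have the same algebraic restriction to f. Then there exists a germ of diffeomorphism Φ:(ℝ^{2n},0)→(ℝ^{2n},0) such that Φ∘f = f on a neighbourhood of 0 in ℝ and Φ^*ω_1 = ω_0 on a neighbourhood of 0 in ℝ^{2n}. -/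
open Filter Topology

noncomputable section

/-- A (set-theoretic) differential 1-form on `ℝ^m`: a map assigning to each point a
function on tangent vectors. -/
def Form1 (m : ℕ) := (Fin m → ℝ) → (Fin m → ℝ) → ℝ

/-- A (set-theoretic) differential 2-form on `ℝ^m`. -/
def Form2 (m : ℕ) := (Fin m → ℝ) → (Fin m → ℝ) → (Fin m → ℝ) → ℝ

/-- A germ at `0` of a smooth differential 1-form: pointwise linear in the tangent
vector, and with coefficients smooth on a neighbourhood of `0`. -/
def IsForm1 (m : ℕ) (β : Form1 m) : Prop :=
  (∀ x u₁ u₂ (c : ℝ), β x (u₁ + c • u₂) = β x u₁ + c * β x u₂) ∧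
  (∀ u, ∃ U ∈ 𝓝 (0 : Fin m → ℝ), ContDiffOn ℝ (⊤ : ℕ∞) (fun x => β x u) U)

/-- A germ at `0` of a smooth differential 2-form: pointwise bilinear and alternating
in the tangent vectors, with coefficients smooth on a neighbourhood of `0`. -/
def IsForm2 (m : ℕ) (ω : Form2 m) : Prop :=
  (∀ x u₁ u₂ v (c : ℝ), ω x (u₁ + c • u₂) v = ω x u₁ v + c * ω x u₂ v) ∧
  (∀ x u v, ω x u v = - ω x v u) ∧
  (∀ u v, ∃ U ∈ 𝓝 (0 : Fin m → ℝ), ContDiffOn ℝ (⊤ : ℕ∞) (fun x => ω x u v) U)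

/-- The exterior derivative of a 1-form, evaluated on a pair of (constant) vectors. -/
def extD1 (m : ℕ) (β : Form1 m) : Form2 m :=
  fun x u v => fderiv ℝ (fun y => β y v) x u - fderiv ℝ (fun y => β y u) x v

/-- The exterior derivative of a 2-form, evaluated on a triple of (constant) vectors. -/
def extD2 (m : ℕ) (ω : Form2 m) (x u v w : Fin m → ℝ) : ℝ :=
  fderiv ℝ (fun y => ω y v w) x u - fderiv ℝ (fun y => ω y u w) x v
    + fderiv ℝ (fun y => ω y u v) x w

/-- A 2-form is closed near `0` if its exterior derivative vanishes near `0`. -/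
def Closed2 (m : ℕ) (ω : Form2 m) : Prop :=
  ∀ᶠ x in 𝓝 (0 : Fin m → ℝ), ∀ u v w, extD2 m ω x u v w = 0

/-- A 1-form vanishes on the image of a curve-germ. -/
def VanishesOn1 (m : ℕ) (β : Form1 m) (f : ℝ → (Fin m → ℝ)) : Prop :=
  ∀ᶠ t in 𝓝 (0 : ℝ), ∀ u, β (f t) u = 0

/-- A 2-form vanishes on the image of a curve-germ. -/
def VanishesOn2 (m : ℕ) (ω : Form2 m) (f : ℝ → (Fin m → ℝ)) : Prop :=
  ∀ᶠ t in 𝓝 (0 : ℝ), ∀ u v, ω (f t) u v = 0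

/-- A 2-form `ω` has zero algebraic restriction to the curve-germ `f` if `ω = α + dβ`
near `0` for a smooth 2-form `α` and a smooth 1-form `β` both vanishing on `im f`. -/
def ZeroAR2 (m : ℕ) (ω : Form2 m) (f : ℝ → (Fin m → ℝ)) : Prop :=
  ∃ (α : Form2 m) (β : Form1 m), IsForm2 m α ∧ IsForm1 m β ∧
    VanishesOn2 m α f ∧ VanishesOn1 m β f ∧
    ∀ᶠ x in 𝓝 (0 : Fin m → ℝ), ∀ u v, ω x u v = α x u v + extD1 m β x u v

/-- Two 2-forms have the same algebraic restriction to `f` if their difference has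
zero algebraic restriction to `f`. -/
def SameAR2 (m : ℕ) (ω₁ ω₂ : Form2 m) (f : ℝ → (Fin m → ℝ)) : Prop :=
  ZeroAR2 m (fun x u v => ω₁ x u v - ω₂ x u v) f

/-- The pullback of a 2-form by a (germ of) smooth map. -/
def pull2 (m : ℕ) (Φ : (Fin m → ℝ) → (Fin m → ℝ)) (ω : Form2 m) : Form2 m :=
  fun x u v => ω (Φ x) (fderiv ℝ Φ x u) (fderiv ℝ Φ x v)

/-- A germ of diffeomorphism of `(ℝ,0)`. -/
def IsDiffeoGerm1 (φ : ℝ → ℝ) : Prop :=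
  φ 0 = 0 ∧ (∃ U ∈ 𝓝 (0 : ℝ), ContDiffOn ℝ (⊤ : ℕ∞) φ U) ∧ deriv φ 0 ≠ 0

/-- A germ of diffeomorphism of `(ℝ^m,0)`. -/
def IsDiffeoGerm (m : ℕ) (Φ : (Fin m → ℝ) → (Fin m → ℝ)) : Prop :=
  Φ 0 = 0 ∧ (∃ U ∈ 𝓝 (0 : Fin m → ℝ), ContDiffOn ℝ (⊤ : ℕ∞) Φ U) ∧
    ∃ D : (Fin m → ℝ) ≃L[ℝ] (Fin m → ℝ),
      HasFDerivAt Φ (D : (Fin m → ℝ) →L[ℝ] (Fin m → ℝ)) 0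

/-- The constant 2-form `dxᵢ ∧ dxⱼ` on `ℝ^m` (indices `0`-based). -/
def wedge (m : ℕ) (i j : Fin m) : Form2 m := fun _ u v => u i * v j - u j * v i

/-- The 2-form `x_l · dxᵢ ∧ dxⱼ` on `ℝ^m` (indices `0`-based). -/
def mwedge (m : ℕ) (l i j : Fin m) : Form2 m :=
  fun x u v => x l * (u i * v j - u j * v i)

/-- A curve-germ: a `C^∞` map from a neighbourhood of `0` in `ℝ` to `ℝ^m` sending `0` to `0`. -/
def IsCurveGerm (m : ℕ) (f : ℝ → (Fin m → ℝ)) : Prop :=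
  f 0 = 0 ∧ ∃ U ∈ 𝓝 (0 : ℝ), ContDiffOn ℝ (⊤ : ℕ∞) f U

/-- `A`-equivalence of curve-germs. -/
def AEquiv (m : ℕ) (f g : ℝ → (Fin m → ℝ)) : Prop :=
  ∃ φ Φ, IsDiffeoGerm1 φ ∧ IsDiffeoGerm m Φ ∧ ∀ᶠ t in 𝓝 (0 : ℝ), Φ (f t) = g (φ t)

/-- Positive integers `μ 0, …, μ (k-1)` are linearly independent over non-negative
integers: no `μ j` is a `ℕ`-linear combination of the others. -/
def LinIndepNonneg {k : ℕ} (μ : Fin k → ℕ) : Prop :=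
  ∀ j : Fin k, ∀ c : Fin k → ℕ, μ j ≠ ∑ i ∈ Finset.univ.erase j, c i * μ i

/-- A quasi-homogeneous curve-germ: one `A`-equivalent to a monomial curve
`t ↦ (t^{μ₁},…,t^{μ_k},0,…,0)` with `μ₁ < … < μ_k` positive and linearly independent
over non-negative integers. -/
def IsQuasiHomogeneousCurve (m : ℕ) (f : ℝ → (Fin m → ℝ)) : Prop :=
  ∃ k : ℕ, 1 ≤ k ∧ k ≤ m ∧ ∃ μ : Fin k → ℕ,
    StrictMono μ ∧ (∀ i, 0 < μ i) ∧ LinIndepNonneg μ ∧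
    AEquiv m f (fun t i => if h : (i : ℕ) < k then t ^ μ ⟨i, h⟩ else 0)

/-- A germ of symplectic form on `ℝ^m`: a smooth 2-form, closed near `0`, and
pointwise non-degenerate near `0`. -/
def IsSymplecticGerm (m : ℕ) (ω : Form2 m) : Prop :=
  IsForm2 m ω ∧ Closed2 m ω ∧
    ∀ᶠ x in 𝓝 (0 : Fin m → ℝ), ∀ u, (∀ v, ω x u v = 0) → u = 0

section Nem
variable {K : Type} [TopologicalSpace K] [CompactSpace K]

/-- pointwise application of operator valued continuous maps -/
noncomputable def apK (K : Type) [TopologicalSpace K] [CompactSpace K] {V W Z : Type}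
    [NormedAddCommGroup V] [NormedSpace ℝ V] [NormedAddCommGroup W] [NormedSpace ℝ W]
    [NormedAddCommGroup Z] [NormedSpace ℝ Z] (j : Z →L[ℝ] V →L[ℝ] W) :
    C(K, Z) →L[ℝ] C(K, V) →L[ℝ] C(K, W) :=
  LinearMap.mkContinuous₂
    (LinearMap.mk₂ ℝ (fun (A : C(K, Z)) (c : C(K, V)) =>
        (⟨fun t => j (A t) (c t), by fun_prop⟩ : C(K, W)))
      (by intros; ext; simp) (by intros; ext; simp) (by intros; ext; simp)
      (by intros; ext; simp)) ‖j‖ (by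
      intro A c
      rw [ContinuousMap.norm_le _ (by positivity)]
      intro t
      simp only [LinearMap.mk₂_apply, ContinuousMap.coe_mk]
      refine (j.le_opNorm₂ _ _).trans ?_
      gcongr
      · exact A.norm_coe_le_norm t
      · exact c.norm_coe_le_norm t)

theorem apK_apply {V W Z : Type}
    [NormedAddCommGroup V] [NormedSpace ℝ V] [NormedAddCommGroup W] [NormedSpace ℝ W]
    [NormedAddCommGroup Z] [NormedSpace ℝ Z] (j : Z →L[ℝ] V →L[ℝ] W)
    (A : C(K, Z)) (c : C(K, V)) (t : K) : apK K j A c t = j (A t) (c t) := rfl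

/-- Nemytskii (superposition) operator -/
def nem {V W : Type} [TopologicalSpace V] [TopologicalSpace W] (G : V → W) (hG : Continuous G)
    (c : C(K, V)) : C(K, W) := (⟨G, hG⟩ : C(V, W)).comp c

theorem nem_apply {V W : Type} [TopologicalSpace V] [TopologicalSpace W] (G : V → W)
    (hG : Continuous G) (c : C(K, V)) (t : K) : nem G hG c t = G (c t) := rfl

theorem nem_hasFDerivAt {V W Z : Type}
    [NormedAddCommGroup V] [NormedSpace ℝ V] [NormedAddCommGroup W] [NormedSpace ℝ W]
    [NormedAddCommGroup Z] [NormedSpace ℝ Z] (j : Z →L[ℝ] V →L[ℝ] W) (G' : V → Z)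
    (G : V → W) (hG : Continuous G) (hG1 : ∀ x, HasFDerivAt G (j (G' x)) x)
    (hG' : Continuous G') (c : C(K, V)) :
    HasFDerivAt (nem (K := K) G hG) (apK K j (nem G' hG' c)) c := by
  rw [hasFDerivAt_iff_isLittleO_nhds_zero, Asymptotics.isLittleO_iff]
  intro ε hε
  have hcont : Continuous (nem (K := K) G' hG') :=
    ContinuousMap.continuous_postcomp _
  obtain ⟨δ, hδ, h1⟩ := Metric.continuous_iff.1 hcont c (ε / (‖j‖ + 1)) (by positivity)
  filter_upwards [Metric.ball_mem_nhds (0 : C(K, V)) hδ] with h hh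
  rw [ContinuousMap.norm_le _ (by positivity)]
  intro t
  have key := Convex.norm_image_sub_le_of_norm_hasFDerivWithin_le' (𝕜 := ℝ) (f := G)
    (f' := fun x => j (G' x))
    (φ := j (G' (c t))) (C := ε) (s := segment ℝ (c t) (c t + h t))
    (x := c t) (y := c t + h t) (fun x _ => (hG1 x).hasFDerivWithinAt) ?_ (convex_segment _ _)
    (left_mem_segment _ _ _) (right_mem_segment _ _ _)
  · simp only [ContinuousMap.sub_apply, nem_apply, ContinuousMap.add_apply, apK_apply]
    rw [add_sub_cancel_left] at key
    exact key.trans (by gcongr; exact h.norm_coe_le_norm t)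
  · intro x hx
    rw [segment_eq_image'] at hx
    obtain ⟨θ, ⟨h0, h2⟩, rfl⟩ := hx
    simp only [add_sub_cancel_left]
    have h3 := h1 (c + θ • h) (by
      rw [dist_eq_norm, add_sub_cancel_left, norm_smul, Real.norm_of_nonneg h0]
      have : ‖h‖ < δ := by simpa using hh
      nlinarith [norm_nonneg h])
    rw [dist_eq_norm] at h3
    have h4 := (nem G' hG' (c + θ • h) - nem G' hG' c).norm_coe_le_norm t
    have h5 : ‖G' (c t + θ • h t) - G' (c t)‖ ≤ ε / (‖j‖ + 1) := h4.trans h3.le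
    rw [← map_sub]
    refine (j.le_opNorm _).trans ((mul_le_mul_of_nonneg_left h5 (norm_nonneg _)).trans ?_)
    rw [mul_div_assoc', div_le_iff₀ (by positivity)]
    nlinarith [norm_nonneg j]

theorem nem_contDiff_nat {V : Type} [NormedAddCommGroup V] [NormedSpace ℝ V] (n : ℕ) :
    ∀ {W : Type} [NormedAddCommGroup W] [NormedSpace ℝ W] (G : V → W) (hG : ContDiff ℝ (⊤ : ℕ∞) G),
      ContDiff ℝ n (nem (K := K) G hG.continuous) := by
  induction n with
  | zero =>
    intro W _ _ G hG
    exact contDiff_zero.2 (ContinuousMap.continuous_postcomp _)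
  | succ n ih =>
    intro W _ _ G hG
    have hd : ContDiff ℝ (⊤ : ℕ∞) (fderiv ℝ G) := hG.fderiv_right (by norm_cast)
    have hh := nem_hasFDerivAt (K := K) (ContinuousLinearMap.id ℝ (V →L[ℝ] W)) (fderiv ℝ G) G
      hG.continuous (fun x => (hG.differentiable (by simp) x).hasFDerivAt) hd.continuous
    have : ((n + 1 : ℕ) : WithTop ℕ∞) = (n : WithTop ℕ∞) + 1 := by norm_cast
    rw [this, contDiff_succ_iff_hasFDerivAt (n := n)]
    exact ⟨_, (apK K (ContinuousLinearMap.id ℝ (V →L[ℝ] W))).contDiff.comp (ih (fderiv ℝ G) hd), hh⟩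

theorem nem_contDiff {V W : Type} [NormedAddCommGroup V] [NormedSpace ℝ V] 
    [NormedAddCommGroup W] [NormedSpace ℝ W] (G : V → W) (hG : ContDiff ℝ (⊤ : ℕ∞) G) :
    ContDiff ℝ (⊤ : ℕ∞) (nem (K := K) G hG.continuous) :=
  contDiff_infty.2 fun n => nem_contDiff_nat n G hG

end Nem

theorem inv_germ {V W : Type} [NormedAddCommGroup V] [NormedSpace ℝ V] [CompleteSpace V]
    [NormedAddCommGroup W] [NormedSpace ℝ W] (T : V → W) (a : V) (T' : V ≃L[ℝ] W)
    (hT : ∀ᶠ x in 𝓝 a, ContDiffAt ℝ (⊤ : ℕ∞) T x) (hd : HasFDerivAt T (T' : V →L[ℝ] W) a) :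
    ∃ S : W → V, S (T a) = a ∧ (∀ᶠ y in 𝓝 (T a), ContDiffAt ℝ (⊤ : ℕ∞) S y) ∧
      (∀ᶠ y in 𝓝 (T a), T (S y) = y) ∧ (∀ᶠ x in 𝓝 a, S (T x) = x) := by
  have ha := hT.self_of_nhds
  have hne : ((⊤ : ℕ∞) : WithTop ℕ∞) ≠ 0 := by simp
  let e := ha.toOpenPartialHomeomorph T hd hne
  have hsrc : a ∈ e.source := ha.mem_toOpenPartialHomeomorph_source hd hne
  have htgt : T a ∈ e.target := ha.image_mem_toOpenPartialHomeomorph_target hd hne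
  have heT : ∀ x, e x = T x := fun x => rfl
  have hSa : e.symm (T a) = a := e.left_inv hsrc
  refine ⟨e.symm, hSa, ?_, ?_, ?_⟩
  · have hc : Tendsto e.symm (𝓝 (T a)) (𝓝 a) := by
      have := e.symm.continuousAt (x := T a) htgt
      rw [ContinuousAt, hSa] at this
      exact this
    have hcf : ContinuousAt (fderiv ℝ T) a :=
      (ha.fderiv_right (m := 0) (by norm_cast)).continuousAt
    have hin : ∀ᶠ x in 𝓝 a, fderiv ℝ T x ∈ Set.range ((↑) : (V ≃L[ℝ] W) → V →L[ℝ] W) := by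
      apply hcf.eventually_mem
      rw [hd.fderiv]
      exact ContinuousLinearEquiv.nhds T'
    filter_upwards [hc.eventually hT, hc.eventually hin, e.open_target.mem_nhds htgt]
      with y h1 h2 h3
    obtain ⟨f', hf'⟩ := h2
    refine e.contDiffAt_symm h3 (f₀' := f') ?_ h1
    rw [hf']
    exact (h1.differentiableAt hne).hasFDerivAt
  · filter_upwards [e.open_target.mem_nhds htgt] with y h3
    exact e.right_inv h3
  · filter_upwards [e.open_source.mem_nhds hsrc] with y h3
    exact e.left_inv h3

section Flow
variable {W : Type} [NormedAddCommGroup W] [NormedSpace ℝ W] [CompleteSpace W]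
  {E : Type} [NormedAddCommGroup E] [NormedSpace ℝ E] [CompleteSpace E]

abbrev II : Type := Set.Icc (0 : ℝ) 1

/-- projection to the unit interval -/
noncomputable def pI (s : ℝ) : II := Set.projIcc 0 1 zero_le_one s

theorem pI_cont : Continuous pI := continuous_projIcc (h := zero_le_one)
theorem pI_of_mem {s : ℝ} (hs : s ∈ Set.Icc (0:ℝ) 1) : ((pI s : II) : ℝ) = s := by
  rw [pI, Set.projIcc_of_mem _ hs]

/-- primitive operator -/
noncomputable def prim : C(II, W) →L[ℝ] C(II, W) :=
  LinearMap.mkContinuous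
    { toFun := fun c => ⟨fun τ => ∫ s in (0:ℝ)..(τ : ℝ), c (pI s), by
        have h : Continuous fun s => c (pI s) := c.continuous.comp pI_cont
        have := intervalIntegral.continuous_primitive (μ := MeasureTheory.volume) (fun a b => h.intervalIntegrable a b) 0
        exact this.comp continuous_subtype_val⟩
      map_add' := by
        intro c d
        ext τ
        have h : ∀ c : C(II, W), Continuous fun s => c (pI s) := fun c => c.continuous.comp pI_cont
        simp only [ContinuousMap.add_apply, ContinuousMap.coe_mk]
        exact intervalIntegral.integral_add ((h c).intervalIntegrable _ _)
          ((h d).intervalIntegrable _ _)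
      map_smul' := by
        intro r c
        ext τ
        simp }
    1 (by
      intro c
      rw [ContinuousMap.norm_le _ (by positivity)]
      intro τ
      simp only [LinearMap.coe_mk, AddHom.coe_mk, ContinuousMap.coe_mk, one_mul]
      refine (intervalIntegral.norm_integral_le_of_norm_le_const
        (C := ‖c‖) (fun x _ => c.norm_coe_le_norm _)).trans ?_
      have h1 := τ.2.1
      have h2 := τ.2.2
      rw [sub_zero, abs_of_nonneg h1]
      nlinarith [norm_nonneg c])

theorem prim_apply (c : C(II, W)) (τ : II) : prim c τ = ∫ s in (0:ℝ)..(τ : ℝ), c (pI s) := rfl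

theorem prim_hasDeriv (c : C(II, W)) {τ : ℝ} (hτ : τ ∈ Set.Icc (0:ℝ) 1) :
    HasDerivWithinAt (fun τ => prim c (pI τ)) (c (pI τ)) (Set.Icc 0 1) τ := by
  have h : Continuous fun s => c (pI s) := c.continuous.comp pI_cont
  have h1 : HasDerivAt (fun τ : ℝ => ∫ s in (0:ℝ)..τ, c (pI s)) (c (pI τ)) τ :=
    h.integral_hasStrictDerivAt 0 τ |>.hasDerivAt
  refine h1.hasDerivWithinAt.congr (fun x hx => ?_) ?_
  · rw [prim_apply, pI_of_mem hx]
  · rw [prim_apply, pI_of_mem hτ]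

/-- constant curves -/
noncomputable def cstL : W →L[ℝ] C(II, W) :=
  LinearMap.mkContinuous
    { toFun := fun w => ContinuousMap.const _ w
      map_add' := by intros; rfl
      map_smul' := by intros; rfl } 1 (by
      intro w
      rw [ContinuousMap.norm_le _ (by positivity)]
      intro τ
      rw [one_mul]
      exact le_refl ‖w‖)

theorem cstL_apply (w : W) (τ : II) : cstL w τ = w := rfl

/-- the curve `s ↦ (s, 0)` -/
def a0 : C(II, ℝ × E) := ⟨fun s => ((s : ℝ), 0), by fun_prop⟩

/-- inclusion `c ↦ (0, c)` -/
noncomputable def inrK : C(II, E) →L[ℝ] C(II, ℝ × E) :=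
  LinearMap.mkContinuous
    { toFun := fun c => ⟨fun τ => ((0 : ℝ), c τ), by fun_prop⟩
      map_add' := by intros; ext <;> simp
      map_smul' := by intros; ext <;> simp } 1 (by
      intro w
      rw [ContinuousMap.norm_le _ (by positivity)]
      intro τ
      simp only [LinearMap.coe_mk, AddHom.coe_mk, ContinuousMap.coe_mk, one_mul, Prod.norm_mk,
        norm_zero]
      exact max_le (norm_nonneg _) (w.norm_coe_le_norm τ))

theorem a0_inrK_apply (c : C(II, E)) (τ : II) : (a0 + inrK c : C(II, ℝ × E)) τ = ((τ : ℝ), c τ) := by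
  have : (a0 + inrK c : C(II, ℝ × E)) τ = ((τ : ℝ), (0 : E)) + ((0 : ℝ), c τ) := rfl
  rw [this]; simp
theorem inrK_apply (c : C(II, E)) (τ : II) : (inrK c) τ = ((0 : ℝ), c τ) := rfl

/-- nonautonomous superposition operator -/
noncomputable def nemt (G : ℝ × E → W) (hG : ContDiff ℝ (⊤ : ℕ∞) G) (c : C(II, E)) : C(II, W) :=
  nem G hG.continuous (a0 + inrK c)

theorem nemt_apply (G : ℝ × E → W) (hG : ContDiff ℝ (⊤ : ℕ∞) G) (c : C(II, E)) (τ : II) :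
    nemt G hG c τ = G ((τ : ℝ), c τ) := by
  rw [nemt, nem_apply, a0_inrK_apply]

theorem nemt_contDiff (G : ℝ × E → W) (hG : ContDiff ℝ (⊤ : ℕ∞) G) :
    ContDiff ℝ (⊤ : ℕ∞) (nemt G hG) :=
  (nem_contDiff G hG).comp (contDiff_const.add (inrK (E := E)).contDiff)

theorem nemt_fderiv (G : ℝ × E → W) (hG : ContDiff ℝ (⊤ : ℕ∞) G) (c d : C(II, E)) (τ : II) :
    fderiv ℝ (nemt G hG) c d τ = fderiv ℝ G ((τ : ℝ), c τ) (0, d τ) := by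
  have hd : ContDiff ℝ (⊤ : ℕ∞) (fderiv ℝ G) := hG.fderiv_right (by norm_cast)
  have h1 := nem_hasFDerivAt (K := II) (ContinuousLinearMap.id ℝ ((ℝ × E) →L[ℝ] W)) (fderiv ℝ G) G
      hG.continuous (fun x => (hG.differentiable (by simp) x).hasFDerivAt) hd.continuous
      (a0 + inrK c)
  have h2 : HasFDerivAt (fun c : C(II, E) => (a0 + inrK c : C(II, ℝ × E))) inrK c :=
    (inrK (E := E)).hasFDerivAt.const_add _
  have h3 : HasFDerivAt (nemt G hG) _ c := h1.comp c h2
  rw [h3.fderiv, ContinuousLinearMap.comp_apply, apK_apply, nem_apply, a0_inrK_apply, inrK_apply]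
  rfl

/-- smooth dependence of integrals on parameters -/
theorem param_contDiff (G : ℝ × E → W) (hG : ContDiff ℝ (⊤ : ℕ∞) G) :
    ContDiff ℝ (⊤ : ℕ∞) (fun x => ∫ s in (0:ℝ)..1, G (s, x)) ∧
    ∀ x u, fderiv ℝ (fun x => ∫ s in (0:ℝ)..1, G (s, x)) x u =
      ∫ s in (0:ℝ)..1, fderiv ℝ G (s, x) (0, u) := by
  let ev : C(II, W) →L[ℝ] W := ContinuousMap.evalCLM ℝ (pI 1)
  have hev : ∀ c : C(II, W), ev (prim c) = ∫ s in (0:ℝ)..1, c (pI s) := by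
    intro c
    change prim c (pI 1) = _
    rw [prim_apply, pI_of_mem (by simp)]
  have hint : ∀ (c : C(II, W)) (F : ℝ → W), (∀ τ : II, c τ = F τ) →
      ev (prim c) = ∫ s in (0:ℝ)..1, F s := by
    intro c F h
    rw [hev]
    apply intervalIntegral.integral_congr
    intro s hs
    rw [Set.uIcc_of_le zero_le_one] at hs
    simp only [h, pI_of_mem hs]
  have heq : (fun x => ∫ s in (0:ℝ)..1, G (s, x)) = (ev.comp prim) ∘ (nemt G hG) ∘ cstL := by
    funext x
    simp only [Function.comp_apply, ContinuousLinearMap.comp_apply]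
    rw [hint _ (fun s => G (s, x))]
    intro τ
    rw [nemt_apply, cstL_apply]
  have hc := nemt_contDiff G hG
  rw [heq]
  refine ⟨(ev.comp prim).contDiff.comp (hc.comp (cstL (W := E)).contDiff), fun x u => ?_⟩
  have h1 : HasFDerivAt (nemt G hG) (fderiv ℝ (nemt G hG) (cstL x)) (cstL x) :=
    (hc.differentiable (by simp) _).hasFDerivAt
  have h2 := ((ev.comp prim).hasFDerivAt).comp x (h1.comp x (cstL (W := E)).hasFDerivAt)
  rw [h2.fderiv]
  simp only [ContinuousLinearMap.comp_apply]
  rw [hint _ (fun s => fderiv ℝ G (s, x) (0, u))]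
  intro τ
  rw [nemt_fderiv]
  rfl

end Flow

section Flow2
variable {E : Type} [NormedAddCommGroup E] [NormedSpace ℝ E] [CompleteSpace E]

theorem flow_exists (X : ℝ × E → E) (hX : ContDiff ℝ (⊤ : ℕ∞) X) (h0 : ∀ τ, X (τ, 0) = 0)
    (h0' : ∀ τ u, fderiv ℝ X (τ, 0) (0, u) = 0) :
    ∃ Φ : ℝ → E → E,
      (∀ᶠ x in 𝓝 (0 : E), Φ 0 x = x) ∧
      (∀ U ∈ 𝓝 (0 : E), ∀ᶠ x in 𝓝 (0 : E), ∀ τ ∈ Set.Icc (0:ℝ) 1, Φ τ x ∈ U) ∧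
      (∀ᶠ x in 𝓝 (0 : E), ∀ τ, ContDiffAt ℝ (⊤ : ℕ∞) (Φ τ) x) ∧
      (∀ᶠ x in 𝓝 (0 : E), ∀ τ ∈ Set.Icc (0:ℝ) 1,
        HasDerivWithinAt (fun τ => Φ τ x) (X (τ, Φ τ x)) (Set.Icc 0 1) τ) ∧
      (∀ᶠ x in 𝓝 (0 : E), ∀ u, ∀ τ ∈ Set.Icc (0:ℝ) 1,
        HasDerivWithinAt (fun τ => fderiv ℝ (Φ τ) x u)
          (fderiv ℝ X (τ, Φ τ x) (0, fderiv ℝ (Φ τ) x u)) (Set.Icc 0 1) τ) ∧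
      (∀ᶠ x in 𝓝 (0 : E), (∀ τ ∈ Set.Icc (0:ℝ) 1, X (τ, x) = 0) → ∀ τ, Φ τ x = x) := by
  let N : C(II, E) → C(II, E) := nemt X hX
  have hN : ContDiff ℝ (⊤ : ℕ∞) N := nemt_contDiff X hX
  have hNa : ∀ c τ, N c τ = X ((τ : ℝ), c τ) := nemt_apply X hX
  have hNd : ∀ c d τ, fderiv ℝ N c d τ = fderiv ℝ X ((τ : ℝ), c τ) (0, d τ) := nemt_fderiv X hX
  let P : C(II, E) →L[ℝ] C(II, E) := prim
  let T : C(II, E) → C(II, E) := fun c => c - P (N c)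
  have hT : ContDiff ℝ (⊤ : ℕ∞) T := contDiff_id.sub (P.contDiff.comp hN)
  have hTd : ∀ c, HasFDerivAt T (ContinuousLinearMap.id ℝ _ - P.comp (fderiv ℝ N c)) c := by
    intro c
    exact (hasFDerivAt_id c).sub
      (P.hasFDerivAt.comp c (hN.differentiable (by simp) c).hasFDerivAt)
  have hN0 : N 0 = 0 := by
    ext τ
    rw [hNa]
    exact h0 _
  have hT0 : T 0 = 0 := by
    change (0 : C(II, E)) - P (N 0) = 0
    rw [hN0]; simp
  have hNd0 : fderiv ℝ N 0 = 0 := by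
    ext d τ
    rw [hNd]
    exact h0' _ _
  have hTd0 : HasFDerivAt T
      ((ContinuousLinearEquiv.refl ℝ C(II, E) : C(II, E) ≃L[ℝ] C(II, E)) :
        C(II, E) →L[ℝ] C(II, E)) 0 := by
    have := hTd 0
    rw [hNd0] at this
    convert this using 1
    ext d τ
    simp
  obtain ⟨S, hS0, hS1, hS2, hS3⟩ := inv_germ T 0 (ContinuousLinearEquiv.refl ℝ C(II, E))
    (Eventually.of_forall fun x => hT.contDiffAt) hTd0
  rw [hT0] at hS0 hS1 hS2
  let k : E →L[ℝ] C(II, E) := cstL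
  have hk : ∀ x τ, k x τ = x := cstL_apply
  have hk0 : Tendsto k (𝓝 0) (𝓝 0) := by
    have := k.continuous.tendsto 0
    rwa [map_zero] at this
  let ev : II → C(II, E) →L[ℝ] E := fun τ => ContinuousMap.evalCLM ℝ τ
  have hev : ∀ τ c, ev τ c = c τ := fun τ c => rfl
  have hsol : ∀ x, T (S (k x)) = k x → ∀ τ : II, S (k x) τ = x + P (N (S (k x))) τ := by
    intro x hx τ
    have h1 : S (k x) = k x + P (N (S (k x))) :=
      eq_add_of_sub_eq (show S (k x) - P (N (S (k x))) = k x from hx)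
    have h2 := congrArg (fun c : C(II, E) => c τ) h1
    simp only [ContinuousMap.add_apply, hk] at h2
    exact h2
  have hP0 : ∀ c, P c (pI 0) = 0 := by
    intro c
    change prim c (pI 0) = 0
    rw [prim_apply, pI_of_mem (by simp)]; simp
  refine ⟨fun τ x => S (k x) (pI τ), ?_, ?_, ?_, ?_, ?_, ?_⟩
  · filter_upwards [hk0.eventually hS2] with x hx
    rw [hsol x hx, hP0, add_zero]
  · intro U hU
    obtain ⟨ε, hε, hεU⟩ := Metric.mem_nhds_iff.1 hU
    have hc : Tendsto (fun x => S (k x)) (𝓝 0) (𝓝 0) := by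
      have := hS1.self_of_nhds.continuousAt.tendsto
      rw [hS0] at this
      exact this.comp hk0
    filter_upwards [hc (Metric.ball_mem_nhds _ hε)] with x hx τ _
    apply hεU
    have : ‖S (k x)‖ < ε := by simpa using hx
    rw [Metric.mem_ball, dist_zero_right]
    exact ((S (k x)).norm_coe_le_norm _).trans_lt this
  · filter_upwards [hk0.eventually hS1] with x hx τ
    exact (ev (pI τ)).contDiff.contDiffAt.comp x (hx.comp x k.contDiff.contDiffAt)
  · filter_upwards [hk0.eventually hS2] with x hx τ hτ
    have h1 := (prim_hasDeriv (N (S (k x))) hτ).const_add x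
    rw [hNa, pI_of_mem hτ] at h1
    refine h1.congr (fun y _ => hsol x hx _) (hsol x hx _)
  · filter_upwards [hk0.eventually hS1, hk0.eventually (eventually_eventually_nhds.2 hS2)]
      with x hx hx2 u τ hτ
    have hSd : HasFDerivAt S (fderiv ℝ S (k x)) (k x) :=
      (hx.differentiableAt (by simp)).hasFDerivAt
    have hfd : ∀ τ, fderiv ℝ (fun x => S (k x) (pI τ)) x u = fderiv ℝ S (k x) (k u) (pI τ) := by
      intro τ
      have h1 := (ev (pI τ)).hasFDerivAt.comp x (hSd.comp x k.hasFDerivAt)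
      have h2 : HasFDerivAt (fun x => S (k x) (pI τ)) _ x := h1
      rw [h2.fderiv]
      rfl
    have hTS : fderiv ℝ S (k x) (k u) - P (fderiv ℝ N (S (k x)) (fderiv ℝ S (k x) (k u))) = k u := by
      have h1 := (hTd (S (k x))).comp (k x) hSd
      have h2 : HasFDerivAt (T ∘ S) (ContinuousLinearMap.id ℝ C(II, E)) (k x) :=
        (hasFDerivAt_id (k x)).congr_of_eventuallyEq hx2
      have h3 := congrArg (fun A : C(II, E) →L[ℝ] C(II, E) => A (k u)) (h1.unique h2)
      exact h3
    set d := fderiv ℝ S (k x) (k u) with hd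
    have hdτ : ∀ τ : II, d τ = u + P (fderiv ℝ N (S (k x)) d) τ := by
      intro τ
      have h2 := congrArg (fun c : C(II, E) => c τ) (eq_add_of_sub_eq hTS)
      simp only [ContinuousMap.add_apply, hk] at h2
      exact h2
    simp only [hfd]
    have h1 := (prim_hasDeriv (fderiv ℝ N (S (k x)) d) hτ).const_add u
    rw [hNd, pI_of_mem hτ] at h1
    exact h1.congr (fun y _ => hdτ _) (hdτ _)
  · filter_upwards [hk0.eventually hS3] with x hx hX0 τ
    have h1 : T (k x) = k x := by
      have : N (k x) = 0 := by
        ext τ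
        rw [hNa, hk]
        exact hX0 _ τ.2
      change k x - P (N (k x)) = k x
      rw [this]; simp
    rw [h1] at hx
    rw [hx, hk]

end Flow2

theorem globalize {V W : Type} [NormedAddCommGroup V] [NormedSpace ℝ V] [FiniteDimensional ℝ V]
    [NormedAddCommGroup W] [NormedSpace ℝ W] (c : V → W) (a : V)
    (h : ∀ᶠ x in 𝓝 a, ContDiffAt ℝ (⊤ : ℕ∞) c x) :
    ∃ c' : V → W, ContDiff ℝ (⊤ : ℕ∞) c' ∧ c' =ᶠ[𝓝 a] c := by
  obtain ⟨U, hU, hUo, haU⟩ := eventually_nhds_iff.1 h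
  obtain ⟨ε, hε, hεU⟩ := Metric.isOpen_iff.1 hUo a haU
  let χ : ContDiffBump a := ⟨ε / 4, ε / 2, by positivity, by linarith⟩
  refine ⟨fun x => χ x • c x, ?_, ?_⟩
  · rw [contDiff_iff_contDiffAt]
    intro x
    by_cases hx : x ∈ U
    · exact χ.contDiff.contDiffAt.smul (hU x hx)
    · have hx' : x ∉ tsupport (χ : V → ℝ) := by
        rw [χ.tsupport_eq]
        intro hm
        apply hx
        apply hεU
        rw [Metric.mem_closedBall] at hm
        rw [Metric.mem_ball]
        have : χ.rOut = ε / 2 := rfl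
        linarith
      have : (fun x => χ x • c x) =ᶠ[𝓝 x] fun _ => 0 := by
        have h2 := notMem_tsupport_iff_eventuallyEq.1 hx'
        filter_upwards [h2] with y hy
        simp [hy]
      exact contDiffAt_const.congr_of_eventuallyEq this
  · filter_upwards [χ.eventuallyEq_one] with x hx
    simp [hx]

theorem interp_contDiff {E W : Type} [NormedAddCommGroup E] [NormedSpace ℝ E]
    [NormedAddCommGroup W] [NormedSpace ℝ W] (f g : E → W) (hf : ContDiff ℝ (⊤ : ℕ∞) f)
    (hg : ContDiff ℝ (⊤ : ℕ∞) g) :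
    ContDiff ℝ (⊤ : ℕ∞) (fun p : ℝ × E => f p.2 + p.1 • (g p.2 - f p.2)) :=
  (hf.comp contDiff_snd).add (contDiff_fst.smul
      ((hg.comp contDiff_snd).sub (hf.comp contDiff_snd)))

theorem interp_self {W : Type} [NormedAddCommGroup W] [NormedSpace ℝ W] (a : W) (τ : ℝ) :
    a + τ • (a - a) = a := by simp

theorem interp_fderiv {E : Type} [NormedAddCommGroup E] [NormedSpace ℝ E] (p q r : E → ℝ)
    (τ : ℝ) (y : E) (hp : DifferentiableAt ℝ p y) (hq : DifferentiableAt ℝ q y)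
    (h : (fun y => p y + τ * (q y - p y)) =ᶠ[𝓝 y] r) (a : E) :
    fderiv ℝ r y a = fderiv ℝ p y a + τ * (fderiv ℝ q y a - fderiv ℝ p y a) := by
  rw [← h.fderiv_eq]
  have h1 := hp.hasFDerivAt.add ((hq.hasFDerivAt.sub hp.hasFDerivAt).const_mul τ)
  have h2 : HasFDerivAt (fun y => p y + τ * (q y - p y)) _ y := h1
  rw [h2.fderiv]
  simp

theorem interp_deriv (p q : ℝ → ℝ) (p' q' : ℝ) (s : Set ℝ) (τ : ℝ)
    (hp : HasDerivWithinAt p p' s τ) (hq : HasDerivWithinAt q q' s τ)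
    (h : p' + (τ * (q' - p') + (q τ - p τ)) = 0) :
    HasDerivWithinAt (fun τ => p τ + τ * (q τ - p τ)) 0 s τ := by
  have t2 := hp.add ((hasDerivWithinAt_id τ s).mul (hq.sub hp))
  refine HasDerivWithinAt.congr_deriv t2 ?_
  rw [← h]
  simp
  ring

section Moser
variable {E : Type} [NormedAddCommGroup E] [NormedSpace ℝ E] 

theorem trideriv (ω : E → E →L[ℝ] E →L[ℝ] ℝ) (hω : ContDiff ℝ (⊤ : ℕ∞) ω) (c a b : ℝ → E)
    (c' a' b' : E) (s : Set ℝ) (τ : ℝ) (hc : HasDerivWithinAt c c' s τ)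
    (ha : HasDerivWithinAt a a' s τ) (hb : HasDerivWithinAt b b' s τ) :
    HasDerivWithinAt (fun τ => ω (c τ) (a τ) (b τ))
      (fderiv ℝ ω (c τ) c' (a τ) (b τ) + ω (c τ) a' (b τ) + ω (c τ) (a τ) b') s τ := by
  have h1 : HasDerivWithinAt (fun τ => ω (c τ)) (fderiv ℝ ω (c τ) c') s τ :=
    (hω.differentiable (by simp) (c τ)).hasFDerivAt.comp_hasDerivWithinAt τ hc
  have h2 := (h1.clm_apply ha).clm_apply hb
  simpa using h2

theorem biderivx (ω : E → E →L[ℝ] E →L[ℝ] ℝ) (X : E → E) (X' : E →L[ℝ] E) (y u v : E)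
    (hω : DifferentiableAt ℝ ω y) (hX : HasFDerivAt X X' y) :
    fderiv ℝ (fun y => ω y (X y) v) y u = fderiv ℝ ω y u (X y) v + ω y (X' u) v := by
  have h1 := (hω.hasFDerivAt.clm_apply hX).clm_apply (hasFDerivAt_const v y)
  rw [h1.fderiv]
  simp
  ring

variable [FiniteDimensional ℝ E]

set_option maxHeartbeats 1000000 in
theorem moser (ω0 ω1 : E → E →L[ℝ] E →L[ℝ] ℝ) (γ : E → E →L[ℝ] ℝ)
    (hω0 : ContDiff ℝ (⊤ : ℕ∞) ω0) (hω1 : ContDiff ℝ (⊤ : ℕ∞) ω1) (hγ : ContDiff ℝ (⊤ : ℕ∞) γ)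
    (ha0 : ∀ᶠ x in 𝓝 0, ∀ u v, ω0 x u v = - ω0 x v u)
    (ha1 : ∀ᶠ x in 𝓝 0, ∀ u v, ω1 x u v = - ω1 x v u)
    (hc0 : ∀ᶠ x in 𝓝 0, ∀ u v w,
      fderiv ℝ ω0 x u v w - fderiv ℝ ω0 x v u w + fderiv ℝ ω0 x w u v = 0)
    (hc1 : ∀ᶠ x in 𝓝 0, ∀ u v w,
      fderiv ℝ ω1 x u v w - fderiv ℝ ω1 x v u w + fderiv ℝ ω1 x w u v = 0)
    (A : E ≃L[ℝ] (E →L[ℝ] ℝ)) (hA0 : ω0 0 = A) (hA1 : ω1 0 = A)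
    (hγ0 : γ 0 = 0) (hγ0' : fderiv ℝ γ 0 = 0)
    (hdγ : ∀ᶠ x in 𝓝 0, ∀ u v, ω0 x u v - ω1 x u v = fderiv ℝ γ x u v - fderiv ℝ γ x v u) :
    ∃ Φ : E → E, (∀ᶠ x in 𝓝 0, ContDiffAt ℝ (⊤ : ℕ∞) Φ x) ∧ (∀ᶠ x in 𝓝 0, γ x = 0 → Φ x = x) ∧
      ∀ᶠ x in 𝓝 0, ∀ u v, ω1 (Φ x) (fderiv ℝ Φ x u) (fderiv ℝ Φ x v) = ω0 x u v := by
  have hcomp : CompleteSpace E := FiniteDimensional.complete ℝ E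
  have hAn := ContinuousLinearEquiv.nhds A
  obtain ⟨inv, hinv, hinvA⟩ := globalize
    (ContinuousLinearMap.inverse : (E →L[ℝ] (E →L[ℝ] ℝ)) → ((E →L[ℝ] ℝ) →L[ℝ] E))
    (A : E →L[ℝ] (E →L[ℝ] ℝ)) (by
      filter_upwards [hAn] with B hB
      obtain ⟨e, rfl⟩ := hB
      exact contDiffAt_map_inverse e)
  have hgood : ∀ᶠ B in 𝓝 (A : E →L[ℝ] (E →L[ℝ] ℝ)), ∀ ξ, B (inv B ξ) = ξ := by
    filter_upwards [hAn, hinvA] with B hB hB2 ξ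
    obtain ⟨e, rfl⟩ := hB
    rw [hB2]
    simp
  let B : ℝ × E → E →L[ℝ] E →L[ℝ] ℝ := fun p => ω0 p.2 + p.1 • (ω1 p.2 - ω0 p.2)
  have hB : ContDiff ℝ (⊤ : ℕ∞) B :=
    interp_contDiff ω0 ω1 hω0 hω1
  have hB0 : ∀ τ, B (τ, 0) = A := by
    intro τ
    simp only [B, hA0, hA1]
    exact interp_self (W := E →L[ℝ] E →L[ℝ] ℝ) _ τ
  let X : ℝ × E → E := fun p => inv (B p) (γ p.2)
  have hX : ContDiff ℝ (⊤ : ℕ∞) X := (hinv.comp hB).clm_apply (hγ.comp contDiff_snd)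
  have hX0 : ∀ τ, X (τ, 0) = 0 := by
    intro τ; simp [X, hγ0]
  have hX0' : ∀ τ u, fderiv ℝ X (τ, 0) (0, u) = 0 := by
    intro τ u
    have h1 : HasFDerivAt (fun p : ℝ × E => γ p.2)
        ((fderiv ℝ γ 0).comp (ContinuousLinearMap.snd ℝ ℝ E)) (τ, (0:E)) := by
      have : HasFDerivAt γ (fderiv ℝ γ 0) ((τ, (0:E)) : ℝ × E).2 :=
        (hγ.differentiable (by simp) _).hasFDerivAt
      exact this.comp (τ, (0:E)) hasFDerivAt_snd
    have h2 := (((hinv.comp hB).differentiable (by simp)) (τ, (0:E))).hasFDerivAt.clm_apply h1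
    have h3 : HasFDerivAt X _ (τ, (0:E)) := h2
    rw [h3.fderiv]
    simp [hγ0, hγ0']
  obtain ⟨Φ, hΦ0, hΦU, hΦs, hΦd, hΦd', hΦfix⟩ := flow_exists X hX hX0 hX0'
  have htube : ∀ᶠ y in 𝓝 (0 : E), ∀ τ ∈ Set.Icc (0:ℝ) 1, ∀ ξ, B (τ, y) (inv (B (τ, y)) ξ) = ξ := by
    apply isCompact_Icc.eventually_forall_of_forall_eventually
    intro τ _
    have hc : Tendsto (fun z : E × ℝ => B (z.2, z.1)) (𝓝 (0, τ)) (𝓝 (A : E →L[ℝ] (E →L[ℝ] ℝ))) := by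
      have h := (hB.continuous.comp continuous_swap).tendsto ((0 : E), τ)
      have h2 : (B ∘ Prod.swap) ((0 : E), τ) = A := hB0 τ
      rw [h2] at h
      exact h
    exact hc.eventually hgood
  have hpt : ∀ᶠ y in 𝓝 (0 : E), ∀ τ ∈ Set.Icc (0:ℝ) 1, ∀ a b,
      fderiv ℝ ω0 y (X (τ, y)) a b + ω0 y (fderiv ℝ X (τ, y) (0, a)) b
        + ω0 y a (fderiv ℝ X (τ, y) (0, b))
      + (τ * ((fderiv ℝ ω1 y (X (τ, y)) a b + ω1 y (fderiv ℝ X (τ, y) (0, a)) b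
        + ω1 y a (fderiv ℝ X (τ, y) (0, b))) - (fderiv ℝ ω0 y (X (τ, y)) a b
          + ω0 y (fderiv ℝ X (τ, y) (0, a)) b
        + ω0 y a (fderiv ℝ X (τ, y) (0, b)))) + (ω1 y a b - ω0 y a b)) = 0 := by
    filter_upwards [eventually_eventually_nhds.2 htube, ha0, ha1, hc0, hc1, hdγ]
      with y hy ha0 ha1 hc0 hc1 hdγ τ hτ a b
    have hXy : HasFDerivAt (fun y => X (τ, y))
        ((fderiv ℝ X (τ, y)).comp (ContinuousLinearMap.inr ℝ ℝ E)) y :=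
      (hX.differentiable (by simp) (τ, y)).hasFDerivAt.comp y (hasFDerivAt_prodMk_right τ y)
    have key : ∀ a b, fderiv ℝ ω0 y a (X (τ, y)) b + ω0 y (fderiv ℝ X (τ, y) (0, a)) b
        + τ * ((fderiv ℝ ω1 y a (X (τ, y)) b + ω1 y (fderiv ℝ X (τ, y) (0, a)) b) -
          (fderiv ℝ ω0 y a (X (τ, y)) b + ω0 y (fderiv ℝ X (τ, y) (0, a)) b))
        = fderiv ℝ γ y a b := by
      intro a b
      have e1 : (fun y => ω0 y (X (τ, y)) b + τ * (ω1 y (X (τ, y)) b - ω0 y (X (τ, y)) b))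
          =ᶠ[𝓝 y] fun y => γ y b := by
        filter_upwards [hy] with z hz
        have := congrArg (fun l : E →L[ℝ] ℝ => l b) (hz τ hτ (γ z))
        simpa [B, X] using this
      have hd0 : DifferentiableAt ℝ ω0 y := hω0.differentiable (by simp) y
      have hd1 : DifferentiableAt ℝ ω1 y := hω1.differentiable (by simp) y
      have hdγ' : HasFDerivAt γ (fderiv ℝ γ y) y := (hγ.differentiable (by simp) y).hasFDerivAt
      have d0 : DifferentiableAt ℝ (fun y => ω0 y (X (τ, y)) b) y :=
        (hd0.clm_apply hXy.differentiableAt).clm_apply (differentiableAt_const b)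
      have d1 : DifferentiableAt ℝ (fun y => ω1 y (X (τ, y)) b) y :=
        (hd1.clm_apply hXy.differentiableAt).clm_apply (differentiableAt_const b)
      have e5 : fderiv ℝ (fun y => γ y b) y a = fderiv ℝ γ y a b := by
        rw [(hdγ'.clm_apply (hasFDerivAt_const b y)).fderiv]
        simp
      rw [← e5, interp_fderiv _ _ _ τ y d0 d1 e1 a]
      rw [biderivx ω0 _ _ y a b hd0 hXy, biderivx ω1 _ _ y a b hd1 hXy]
      simp
    have k1 := key a b
    have k2 := key b a
    have z0 := hc0 (X (τ, y)) a b
    have z1 := hc1 (X (τ, y)) a b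
    have s0 := ha0 a (fderiv ℝ X (τ, y) (0, b))
    have s1 := ha1 a (fderiv ℝ X (τ, y) (0, b))
    have g := hdγ a b
    rw [s0, s1]
    linear_combination k1 - k2 + (1 - τ) * z0 + τ * z1 - g
  refine ⟨Φ 1, hΦs.mono fun x h => h 1, ?_, ?_⟩
  · filter_upwards [hΦfix] with x hx hγx
    apply hx
    intro τ _
    simp [X, hγx]
  · filter_upwards [eventually_eventually_nhds.2 hΦ0, hΦU _ hpt, hΦd, hΦd']
      with x h0 hU hd hd' u v
    have hder : ∀ τ ∈ Set.Icc (0:ℝ) 1, HasDerivWithinAt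
        (fun τ => ω0 (Φ τ x) (fderiv ℝ (Φ τ) x u) (fderiv ℝ (Φ τ) x v) +
          τ * (ω1 (Φ τ x) (fderiv ℝ (Φ τ) x u) (fderiv ℝ (Φ τ) x v) -
            ω0 (Φ τ x) (fderiv ℝ (Φ τ) x u) (fderiv ℝ (Φ τ) x v))) 0 (Set.Icc 0 1) τ := by
      intro τ hτ
      have t0 := trideriv ω0 hω0 _ _ _ _ _ _ _ τ (hd τ hτ) (hd' u τ hτ) (hd' v τ hτ)
      have t1 := trideriv ω1 hω1 _ _ _ _ _ _ _ τ (hd τ hτ) (hd' u τ hτ) (hd' v τ hτ)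
      have t3 := hU τ hτ τ hτ (fderiv ℝ (Φ τ) x u) (fderiv ℝ (Φ τ) x v)
      exact interp_deriv _ _ _ _ _ τ t0 t1 t3
    have hcst := constant_of_has_deriv_right_zero (f := (fun τ => ω0 (Φ τ x) (fderiv ℝ (Φ τ) x u) (fderiv ℝ (Φ τ) x v) +
          τ * (ω1 (Φ τ x) (fderiv ℝ (Φ τ) x u) (fderiv ℝ (Φ τ) x v) -
            ω0 (Φ τ x) (fderiv ℝ (Φ τ) x u) (fderiv ℝ (Φ τ) x v)))) (a := 0) (b := 1)
      (fun τ hτ => (hder τ hτ).continuousWithinAt) (fun τ hτ =>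
        ((hder τ ⟨hτ.1, hτ.2.le⟩).mono_of_mem_nhdsWithin (Icc_mem_nhdsGE_of_mem hτ))) 1 (by simp)
    have hf0 : fderiv ℝ (Φ 0) x = ContinuousLinearMap.id ℝ E := by
      have : Φ 0 =ᶠ[𝓝 x] id := h0
      rw [this.fderiv_eq]
      exact fderiv_id
    simp only [hf0, h0.self_of_nhds] at hcst
    simpa using hcst

end Moser

section Homotopy
variable {E : Type} [NormedAddCommGroup E] [NormedSpace ℝ E]

theorem clm_comp_contDiff {Z : Type} [NormedAddCommGroup Z] [NormedSpace ℝ Z]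
    (f : Z → E →L[ℝ] ℝ) (g : Z → E →L[ℝ] E) (hf : ContDiff ℝ (⊤ : ℕ∞) f)
    (hg : ContDiff ℝ (⊤ : ℕ∞) g) : ContDiff ℝ (⊤ : ℕ∞) (fun z => (f z).comp (g z)) :=
  hf.clm_comp hg

variable [FiniteDimensional ℝ E]

/-- the integrand of the homotopy operator -/
noncomputable def hoInt (α : E → E →L[ℝ] E →L[ℝ] ℝ) (h : ℝ → E →L[ℝ] E) (p : ℝ × E) : E →L[ℝ] ℝ :=
  (α (h p.1 p.2) (deriv h p.1 p.2)).comp (h p.1)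

noncomputable def ho (α : E → E →L[ℝ] E →L[ℝ] ℝ) (h : ℝ → E →L[ℝ] E) (x : E) : E →L[ℝ] ℝ :=
  ∫ s in (0:ℝ)..1, hoInt α h (s, x)

theorem deriv_smooth {W : Type} [NormedAddCommGroup W] [NormedSpace ℝ W] (h : ℝ → W)
    (hh : ContDiff ℝ (⊤ : ℕ∞) h) : ContDiff ℝ (⊤ : ℕ∞) (deriv h) :=
  (contDiff_infty_iff_deriv.1 hh).2

theorem hoInt_contDiff (α : E → E →L[ℝ] E →L[ℝ] ℝ) (h : ℝ → E →L[ℝ] E)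
    (hα : ContDiff ℝ (⊤ : ℕ∞) α) (hh : ContDiff ℝ (⊤ : ℕ∞) h) :
    ContDiff ℝ (⊤ : ℕ∞) (hoInt α h) := by
  have hh' := deriv_smooth h hh
  have h1 : ContDiff ℝ (⊤ : ℕ∞) (fun p : ℝ × E => h p.1 p.2) :=
    (hh.comp contDiff_fst).clm_apply contDiff_snd
  have h2 : ContDiff ℝ (⊤ : ℕ∞) (fun p : ℝ × E => deriv h p.1 p.2) :=
    (hh'.comp contDiff_fst).clm_apply contDiff_snd
  exact clm_comp_contDiff _ _ ((hα.comp h1).clm_apply h2) (hh.comp contDiff_fst)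

theorem hoInt_fderiv (α : E → E →L[ℝ] E →L[ℝ] ℝ) (h : ℝ → E →L[ℝ] E)
    (hα : ContDiff ℝ (⊤ : ℕ∞) α) (hh : ContDiff ℝ (⊤ : ℕ∞) h) (s : ℝ) (x u v : E) :
    fderiv ℝ (hoInt α h) (s, x) (0, u) v =
      fderiv ℝ α (h s x) (h s u) (deriv h s x) (h s v) + α (h s x) (deriv h s u) (h s v) := by
  have h1 : HasFDerivAt (fun y => hoInt α h (s, y))
      ((fderiv ℝ (hoInt α h) (s, x)).comp (ContinuousLinearMap.inr ℝ ℝ E)) x :=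
    ((hoInt_contDiff α h hα hh).differentiable (by simp) (s, x)).hasFDerivAt.comp x
      (hasFDerivAt_prodMk_right s x)
  have h2 := h1.clm_apply (hasFDerivAt_const v x)
  have h3 : HasFDerivAt (fun y => α (h s y)) ((fderiv ℝ α (h s x)).comp (h s)) x :=
    (hα.differentiable (by simp) (h s x)).hasFDerivAt.comp x (h s).hasFDerivAt
  have h4 := (h3.clm_apply (deriv h s).hasFDerivAt).clm_apply (hasFDerivAt_const (h s v) x)
  have h5 : HasFDerivAt (fun y => hoInt α h (s, y) v) _ x := h4
  have h6 := congrArg (fun l : E →L[ℝ] ℝ => l u) (h2.unique h5)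
  simp at h6
  rw [h6]
  ring

theorem ho_contDiff (α : E → E →L[ℝ] E →L[ℝ] ℝ) (h : ℝ → E →L[ℝ] E)
    (hα : ContDiff ℝ (⊤ : ℕ∞) α) (hh : ContDiff ℝ (⊤ : ℕ∞) h) :
    ContDiff ℝ (⊤ : ℕ∞) (ho α h) := by
  have hcomp : CompleteSpace E := FiniteDimensional.complete ℝ E
  exact (param_contDiff (hoInt α h) (hoInt_contDiff α h hα hh)).1

theorem ho_fderiv (α : E → E →L[ℝ] E →L[ℝ] ℝ) (h : ℝ → E →L[ℝ] E)
    (hα : ContDiff ℝ (⊤ : ℕ∞) α) (hh : ContDiff ℝ (⊤ : ℕ∞) h) (x u v : E) :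
    fderiv ℝ (ho α h) x u v = ∫ s in (0:ℝ)..1,
      fderiv ℝ (hoInt α h) (s, x) (0, u) v := by
  have hcomp : CompleteSpace E := FiniteDimensional.complete ℝ E
  have h1 := (param_contDiff (hoInt α h) (hoInt_contDiff α h hα hh)).2 x u
  have h2 : fderiv ℝ (ho α h) x u = _ := h1
  rw [h2]
  apply ContinuousLinearMap.intervalIntegral_apply
  apply Continuous.intervalIntegrable
  have h3 := (hoInt_contDiff α h hα hh).continuous_fderiv (by simp)
  exact (h3.comp (by fun_prop : Continuous fun s : ℝ => (s, x))).clm_apply continuous_const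

theorem ho_apply (α : E → E →L[ℝ] E →L[ℝ] ℝ) (h : ℝ → E →L[ℝ] E)
    (hα : ContDiff ℝ (⊤ : ℕ∞) α) (hh : ContDiff ℝ (⊤ : ℕ∞) h) (x v : E) :
    ho α h x v = ∫ s in (0:ℝ)..1, α (h s x) (deriv h s x) (h s v) := by
  have hcomp : CompleteSpace E := FiniteDimensional.complete ℝ E
  have : ho α h x v = ∫ s in (0:ℝ)..1, hoInt α h (s, x) v := by
    apply ContinuousLinearMap.intervalIntegral_apply
    apply Continuous.intervalIntegrable
    exact (hoInt_contDiff α h hα hh).continuous.comp (by fun_prop : Continuous fun s : ℝ => (s, x))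
  rw [this]
  rfl

theorem ho_d (α : E → E →L[ℝ] E →L[ℝ] ℝ) (h : ℝ → E →L[ℝ] E)
    (hα : ContDiff ℝ (⊤ : ℕ∞) α) (hh : ContDiff ℝ (⊤ : ℕ∞) h)
    (ha : ∀ᶠ x in 𝓝 0, ∀ u v, α x u v = - α x v u)
    (hc : ∀ᶠ x in 𝓝 0, ∀ u v w,
      fderiv ℝ α x u v w - fderiv ℝ α x v u w + fderiv ℝ α x w u v = 0) :
    ∀ᶠ x in 𝓝 0, ∀ u v, fderiv ℝ (ho α h) x u v - fderiv ℝ (ho α h) x v u =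
      α (h 1 x) (h 1 u) (h 1 v) - α (h 0 x) (h 0 u) (h 0 v) := by
  have htube : ∀ᶠ x in 𝓝 (0 : E), ∀ s ∈ Set.Icc (0:ℝ) 1, (∀ u v, α (h s x) u v = - α (h s x) v u) ∧
      ∀ u v w, fderiv ℝ α (h s x) u v w - fderiv ℝ α (h s x) v u w + fderiv ℝ α (h s x) w u v = 0 := by
    apply isCompact_Icc.eventually_forall_of_forall_eventually
    intro s _
    have hcn : Continuous (fun z : E × ℝ => h z.2 z.1) :=
      (hh.continuous.comp continuous_snd).clm_apply continuous_fst
    have ht : Tendsto (fun z : E × ℝ => h z.2 z.1) (𝓝 (0, s)) (𝓝 0) := by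
      have := hcn.tendsto ((0 : E), s)
      simpa using this
    exact ht.eventually (ha.and hc)
  filter_upwards [htube] with x hx u v
  rw [ho_fderiv α h hα hh, ho_fderiv α h hα hh]
  have hdh : ∀ s w, HasDerivAt (fun s => h s w) (deriv h s w) s := by
    intro s w
    have h1 : HasDerivAt h (deriv h s) s := (hh.differentiable (by simp) s).hasDerivAt
    simpa using h1.clm_apply (hasDerivAt_const s w)
  have hcI : ∀ u v, Continuous (fun s => fderiv ℝ (hoInt α h) (s, x) (0, u) v) := by
    intro u v
    have h3 := (hoInt_contDiff α h hα hh).continuous_fderiv (by simp)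
    exact ((h3.comp (by fun_prop : Continuous fun s : ℝ => (s, x))).clm_apply
      continuous_const).clm_apply continuous_const
  rw [← intervalIntegral.integral_sub ((hcI u v).intervalIntegrable 0 1)
    ((hcI v u).intervalIntegrable 0 1)]
  apply intervalIntegral.integral_eq_sub_of_hasDerivAt
    (f := fun s => α (h s x) (h s u) (h s v))
  · intro s hs
    rw [Set.uIcc_of_le zero_le_one] at hs
    have t := trideriv α hα (fun s => h s x) (fun s => h s u) (fun s => h s v) _ _ _ Set.univ s
      (hdh s x).hasDerivWithinAt (hdh s u).hasDerivWithinAt (hdh s v).hasDerivWithinAt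
    rw [hasDerivWithinAt_univ] at t
    refine t.congr_deriv ?_
    rw [hoInt_fderiv α h hα hh, hoInt_fderiv α h hα hh]
    obtain ⟨h1, h2⟩ := hx s hs
    linear_combination h2 (deriv h s x) (h s u) (h s v) + h1 (h s u) (deriv h s v)
  · exact ((hcI u v).sub (hcI v u)).intervalIntegrable 0 1

end Homotopy

theorem hadamard {E : Type} [NormedAddCommGroup E] [NormedSpace ℝ E] [FiniteDimensional ℝ E]
    (c : E → ℝ) (hc : ContDiff ℝ (⊤ : ℕ∞) c) :
    ∃ C : E → E →L[ℝ] ℝ, ContDiff ℝ (⊤ : ℕ∞) C ∧ (∀ x, c x = c 0 + C x x) ∧ C 0 = fderiv ℝ c 0 := by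
  have hcomp : CompleteSpace E := FiniteDimensional.complete ℝ E
  have hc' : ContDiff ℝ (⊤ : ℕ∞) (fderiv ℝ c) := hc.fderiv_right (by simp)
  have hG : ContDiff ℝ (⊤ : ℕ∞) (fun p : ℝ × E => fderiv ℝ c (p.1 • p.2)) :=
    hc'.comp (contDiff_fst.smul contDiff_snd)
  refine ⟨fun x => ∫ s in (0:ℝ)..1, fderiv ℝ c (s • x), (param_contDiff _ hG).1, ?_, ?_⟩
  · intro x
    have hcont : Continuous (fun s : ℝ => fderiv ℝ c (s • x)) :=
      hG.continuous.comp (by fun_prop : Continuous fun s : ℝ => (s, x))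
    rw [ContinuousLinearMap.intervalIntegral_apply (hcont.intervalIntegrable 0 1)]
    have hd : ∀ s ∈ Set.uIcc (0:ℝ) 1, HasDerivAt (fun s : ℝ => c (s • x)) (fderiv ℝ c (s • x) x) s := by
      intro s _
      have h1 : HasDerivAt (fun s : ℝ => s • x) x s := by
        simpa using (hasDerivAt_id s).smul_const x
      exact (hc.differentiable (by simp) (s • x)).hasFDerivAt.comp_hasDerivAt s h1
    have := intervalIntegral.integral_eq_sub_of_hasDerivAt hd
      ((hcont.clm_apply continuous_const).intervalIntegrable 0 1)
    rw [this]
    simp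
  · simp

/-- The monomial curve. -/
noncomputable def mono (m k : ℕ) (μ : Fin k → ℕ) : ℝ → Fin m → ℝ :=
  fun t i => if h : (i : ℕ) < k then t ^ μ ⟨i, h⟩ else 0

theorem mono_contDiff (m k : ℕ) (μ : Fin k → ℕ) : ContDiff ℝ (⊤ : ℕ∞) (mono m k μ) := by
  rw [contDiff_pi]
  intro i
  unfold mono
  split_ifs
  · exact contDiff_id.pow _
  · exact contDiff_const

theorem mono_zero (m k : ℕ) (μ : Fin k → ℕ) (hμ : ∀ i, 0 < μ i) : mono m k μ 0 = 0 := by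
  ext i
  unfold mono
  split_ifs
  · simp [(hμ _).ne']
  · rfl

/-- the numerical semigroup -/
def Sg {k : ℕ} (μ : Fin k → ℕ) (M : ℕ) : Prop := ∃ c : Fin k → ℕ, M = ∑ i, c i * μ i

theorem Sg_add {k : ℕ} (μ : Fin k → ℕ) (M : ℕ) (i : Fin k) (h : Sg μ M) : Sg μ (M + μ i) := by
  obtain ⟨c, rfl⟩ := h
  refine ⟨c + Pi.single i 1, ?_⟩
  simp [add_mul, Finset.sum_add_distrib, Pi.single_apply]

theorem iter_pow_mul (N M : ℕ) (H : ℝ → ℝ) (hH : ContDiff ℝ (⊤ : ℕ∞) H)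
    (h : N ≤ M → iteratedDeriv (M - N) H 0 = 0) :
    iteratedDeriv M (fun t => t ^ N * H t) 0 = 0 := by
  rw [iteratedDeriv_fun_mul (f := fun t : ℝ => t ^ N) (contDiff_id.pow N).contDiffAt (hH.of_le (by exact_mod_cast le_top)).contDiffAt]
  apply Finset.sum_eq_zero
  intro i hi
  rw [iteratedDeriv_fun_pow_zero]
  split_ifs with hiN
  · subst hiN
    rw [h (by simpa [Nat.lt_succ_iff] using hi)]
    simp
  · simp

theorem iter_pow_mul_self (N : ℕ) (H : ℝ → ℝ) (hH : ContDiff ℝ (⊤ : ℕ∞) H) :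
    iteratedDeriv N (fun t => t ^ N * H t) 0 = N.factorial * H 0 := by
  rw [iteratedDeriv_fun_mul (f := fun t : ℝ => t ^ N) (contDiff_id.pow N).contDiffAt (hH.of_le (by exact_mod_cast le_top)).contDiffAt]
  rw [Finset.sum_eq_single N]
  · rw [iteratedDeriv_fun_pow_zero]
    simp
  · intro i _ hi
    rw [iteratedDeriv_fun_pow_zero]
    simp [hi]
  · simp

theorem iter_expand (m k : ℕ) (μ : Fin k → ℕ) (c : (Fin m → ℝ) → ℝ)
    (hc : ContDiff ℝ (⊤ : ℕ∞) c) :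
    ∃ C : Fin m → (Fin m → ℝ) → ℝ, (∀ i, ContDiff ℝ (⊤ : ℕ∞) (C i)) ∧
      (∀ i, C i 0 = fderiv ℝ c 0 (Pi.single i 1)) ∧
      ∀ M, 0 < M → iteratedDeriv M (fun t => c (mono m k μ t)) 0 =
        ∑ i, iteratedDeriv M (fun t => mono m k μ t i * C i (mono m k μ t)) 0 := by
  obtain ⟨C, hC, hcC, hC0⟩ := hadamard c hc
  have hCi : ∀ i : Fin m, ContDiff ℝ (⊤ : ℕ∞) (fun x => C x (Pi.single i 1)) :=
    fun i => hC.clm_apply contDiff_const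
  refine ⟨fun i x => C x (Pi.single i 1), hCi, ?_, ?_⟩
  · intro i
    simp only [hC0]
  · intro M hM
    have h1 : (fun t => c (mono m k μ t)) = fun t => c 0 + 
        ∑ i, mono m k μ t i * C (mono m k μ t) (Pi.single i 1) := by
      ext t
      rw [hcC]
      congr 1
      conv_lhs => rw [← Finset.univ_sum_single (mono m k μ t)]
      rw [map_sum]
      apply Finset.sum_congr rfl
      intro i _
      rw [Finset.univ_sum_single]
      have : (Pi.single i (mono m k μ t i) : Fin m → ℝ) = mono m k μ t i • Pi.single i 1 := by
        rw [← Pi.single_smul]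
        simp
      rw [this, map_smul, smul_eq_mul]
    rw [h1, iteratedDeriv_const_add hM]
    apply iteratedDeriv_fun_sum
    intro i _
    have h2 : ContDiff ℝ (⊤ : ℕ∞) (fun t => mono m k μ t i) := contDiff_pi.1 (mono_contDiff m k μ) i
    exact ((h2.mul ((hCi i).comp (mono_contDiff m k μ))).of_le (by exact_mod_cast le_top)).contDiffAt

theorem iter_zero (m k : ℕ) (μ : Fin k → ℕ) (hμ : ∀ i, 0 < μ i) (M : ℕ) :
    ¬ Sg μ M → ∀ c : (Fin m → ℝ) → ℝ, ContDiff ℝ (⊤ : ℕ∞) c →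
      iteratedDeriv M (fun t => c (mono m k μ t)) 0 = 0 := by
  induction M using Nat.strong_induction_on with
  | _ M ih =>
    intro hM c hc
    have hM0 : 0 < M := by
      rcases Nat.eq_zero_or_pos M with h | h
      · exact absurd ⟨0, by simp [h]⟩ hM
      · exact h
    obtain ⟨C, hC, -, hexp⟩ := iter_expand m k μ c hc
    rw [hexp M hM0]
    apply Finset.sum_eq_zero
    intro i _
    by_cases h : (i : ℕ) < k
    · have e : (fun t => mono m k μ t i * C i (mono m k μ t)) =
          fun t => t ^ μ ⟨i, h⟩ * C i (mono m k μ t) := by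
        ext t; simp [mono, h]
      rw [e]
      apply iter_pow_mul _ _ _ ((hC i).comp (mono_contDiff m k μ))
      intro hle
      apply ih _ (by have := hμ ⟨i, h⟩; omega) _ _ (hC i)
      intro hS
      apply hM
      have := Sg_add μ _ ⟨i, h⟩ hS
      rwa [Nat.sub_add_cancel hle] at this
    · have e : (fun t => mono m k μ t i * C i (mono m k μ t)) = fun t => 0 := by
        ext t; simp [mono, h]
      rw [e]
      simp

theorem lemmaA (m k : ℕ) (μ : Fin k → ℕ) (hμ : ∀ i, 0 < μ i)
    (hlin : ∀ j : Fin k, ∀ c : Fin k → ℕ, μ j ≠ ∑ i ∈ Finset.univ.erase j, c i * μ i)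
    (c : (Fin m → ℝ) → ℝ) (hc : ContDiff ℝ (⊤ : ℕ∞) c)
    (h0 : ∀ᶠ t in 𝓝 0, c (mono m k μ t) = 0) (i : Fin m) (hi : (i : ℕ) < k) :
    fderiv ℝ c 0 (Pi.single i 1) = 0 := by
  obtain ⟨C, hC, hC0, hexp⟩ := iter_expand m k μ c hc
  have h1 : iteratedDeriv (μ ⟨i, hi⟩) (fun t => c (mono m k μ t)) 0 = 0 := by
    rw [Filter.EventuallyEq.iteratedDeriv_eq (g := fun _ => (0:ℝ)) _ h0]
    simp
  rw [hexp _ (hμ _), Finset.sum_eq_single i] at h1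
  · have e : (fun t => mono m k μ t i * C i (mono m k μ t)) =
          fun t => t ^ μ ⟨i, hi⟩ * C i (mono m k μ t) := by
        ext t; simp [mono, hi]
    rw [e, iter_pow_mul_self _ (fun t => C i (mono m k μ t)) ((hC i).comp (mono_contDiff m k μ)), mono_zero m k μ hμ, hC0] at h1
    rcases mul_eq_zero.1 h1 with h | h
    · exact absurd h (by positivity)
    · exact h
  · intro j _ hji
    by_cases h : (j : ℕ) < k
    · have e : (fun t => mono m k μ t j * C j (mono m k μ t)) =
          fun t => t ^ μ ⟨j, h⟩ * C j (mono m k μ t) := by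
        ext t; simp [mono, h]
      rw [e]
      apply iter_pow_mul _ _ _ ((hC j).comp (mono_contDiff m k μ))
      intro hle
      apply iter_zero m k μ hμ _ _ _ (hC j)
      rintro ⟨d, hd⟩
      have hne : (⟨j, h⟩ : Fin k) ≠ ⟨i, hi⟩ := by
        intro hh; apply hji; ext; simpa using hh
      have hs : μ ⟨i, hi⟩ = ∑ l, (d + Pi.single (⟨j, h⟩ : Fin k) 1 : Fin k → ℕ) l * μ l := by
        have : ∑ l, (d + Pi.single (⟨j, h⟩ : Fin k) 1 : Fin k → ℕ) l * μ l = ∑ l, d l * μ l + μ ⟨j, h⟩ := by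
          simp [add_mul, Finset.sum_add_distrib, Pi.single_apply]
        rw [this]; omega
      have hdi : d ⟨i, hi⟩ = 0 := by
        by_contra hd0
        have h2 : d ⟨i, hi⟩ * μ ⟨i, hi⟩ ≤ ∑ l, d l * μ l :=
          Finset.single_le_sum (f := fun l => d l * μ l) (fun _ _ => Nat.zero_le _) (Finset.mem_univ _)
        have h3 : μ ⟨i, hi⟩ ≤ d ⟨i, hi⟩ * μ ⟨i, hi⟩ := Nat.le_mul_of_pos_left _ (Nat.pos_of_ne_zero hd0)
        have := hμ ⟨j, h⟩
        omega
      apply hlin ⟨i, hi⟩ (d + Pi.single ⟨j, h⟩ 1)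
      rw [← Finset.add_sum_erase _ _ (Finset.mem_univ (⟨i, hi⟩ : Fin k))] at hs
      rw [hs]
      simp [hdi, Pi.single_apply, hne.symm]
    · have e : (fun t => mono m k μ t j * C j (mono m k μ t)) = fun t => 0 := by
        ext t; simp [mono, h]
      rw [e]
      simp
  · simp

section Witt
variable {V : Type} [AddCommGroup V] [Module ℝ V] [FiniteDimensional ℝ V]

theorem nondeg_surj (a : V →ₗ[ℝ] V →ₗ[ℝ] ℝ) (hn : ∀ u, (∀ v, a u v = 0) → u = 0) :
    Function.Surjective a := by
  have hinj : Function.Injective a := by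
    rw [← LinearMap.ker_eq_bot, LinearMap.ker_eq_bot']
    intro u hu
    exact hn u (fun v => by simp [hu])
  have hfr : Module.finrank ℝ V = Module.finrank ℝ (V →ₗ[ℝ] ℝ) :=
    (Subspace.dual_finrank_eq (K := ℝ) (V := V)).symm
  exact (LinearMap.injective_iff_surjective_of_finrank_eq_finrank hfr).1 hinj

theorem witt_step (a0 a1 : V →ₗ[ℝ] V →ₗ[ℝ] ℝ)
    (hn0 : ∀ u, (∀ v, a0 u v = 0) → u = 0) (hn1 : ∀ u, (∀ v, a1 u v = 0) → u = 0)
    (W : Submodule ℝ V) (L : V →ₗ[ℝ] V) (hinj : ∀ u ∈ W, L u = 0 → u = 0)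
    (hiso : ∀ u ∈ W, ∀ v ∈ W, a1 (L u) (L v) = a0 u v) (v : V) (hv : v ∉ W) :
    ∃ w', (∀ w ∈ W, a1 w' (L w) = a0 v w) ∧ w' ∉ W.map L := by
  let ι0 : W →ₗ[ℝ] V := W.subtype
  let ι1 : W →ₗ[ℝ] V := L.comp W.subtype
  have hι0 : Function.Injective ι0 := W.subtype_injective
  have hι1 : Function.Injective ι1 := by
    rw [← LinearMap.ker_eq_bot, LinearMap.ker_eq_bot']
    intro u hu
    exact Subtype.ext (hinj u u.2 hu)
  let T0 : V →ₗ[ℝ] Module.Dual ℝ W := ι0.dualMap.comp a0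
  let T1 : V →ₗ[ℝ] Module.Dual ℝ W := ι1.dualMap.comp a1
  have hT0 : Function.Surjective T0 :=
    (LinearMap.dualMap_surjective_of_injective hι0).comp (nondeg_surj a0 hn0)
  have hT1 : Function.Surjective T1 :=
    (LinearMap.dualMap_surjective_of_injective hι1).comp (nondeg_surj a1 hn1)
  have hTT : T1.comp ι1 = T0.comp ι0 := by
    ext u w
    exact hiso u u.2 w w.2
  obtain ⟨z, hz⟩ := hT1 (T0 v)
  have hzw : ∀ w ∈ W, a1 z (L w) = a0 v w := fun w hw => LinearMap.congr_fun hz ⟨w, hw⟩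
  by_cases hzL : z ∈ W.map L
  swap
  · exact ⟨z, hzw, hzL⟩
  by_cases hk : LinearMap.ker T1 ≤ LinearMap.range ι1
  · exfalso
    have f0 := LinearMap.finrank_range_add_finrank_ker T0
    have f1 := LinearMap.finrank_range_add_finrank_ker T1
    rw [LinearMap.range_eq_top.2 hT0] at f0
    rw [LinearMap.range_eq_top.2 hT1] at f1
    let X := LinearMap.ker (T1.comp ι1)
    have hX1 : X.map ι1 = LinearMap.ker T1 := by
      have : X = (LinearMap.ker T1).comap ι1 := LinearMap.ker_comp _ _
      rw [this, Submodule.map_comap_eq]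
      exact inf_eq_right.2 hk
    have hX0 : X.map ι0 ≤ LinearMap.ker T0 := by
      have : X = (LinearMap.ker T0).comap ι0 := by
        simp only [X]
        rw [hTT]
        exact LinearMap.ker_comp _ _
      rw [this]
      exact Submodule.map_comap_le _ _
    have e1 : Module.finrank ℝ (X.map ι1) = Module.finrank ℝ X :=
      (LinearEquiv.finrank_eq (Submodule.equivMapOfInjective _ hι1 X)).symm
    have e0 : Module.finrank ℝ (X.map ι0) = Module.finrank ℝ X :=
      (LinearEquiv.finrank_eq (Submodule.equivMapOfInjective _ hι0 X)).symm
    have e2 : X.map ι0 = LinearMap.ker T0 := by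
      apply Submodule.eq_of_le_of_finrank_eq hX0
      rw [e0, ← e1, hX1]
      omega
    obtain ⟨w0, hw0, rfl⟩ := hzL
    have hmem : v - w0 ∈ LinearMap.ker T0 := by
      rw [LinearMap.mem_ker, map_sub, ← hz, sub_eq_zero]
      have := LinearMap.congr_fun hTT ⟨w0, hw0⟩
      exact this
    rw [← e2] at hmem
    obtain ⟨y, _, hy⟩ := hmem
    apply hv
    have : v = (y : V) + w0 := by
      have : (y : V) = v - w0 := hy
      rw [this]; simp
    rw [this]
    exact W.add_mem y.2 hw0
  · obtain ⟨y, hy, hyn⟩ := SetLike.not_le_iff_exists.1 hk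
    refine ⟨z + y, ?_, ?_⟩
    · intro w hw
      have : a1 y (L w) = 0 := LinearMap.congr_fun (LinearMap.mem_ker.1 hy) ⟨w, hw⟩
      rw [map_add, LinearMap.add_apply, this, hzw w hw, add_zero]
    · intro h
      have h2 := (W.map L).sub_mem h hzL
      rw [add_sub_cancel_left] at h2
      obtain ⟨w, hw, rfl⟩ := h2
      exact hyn ⟨⟨w, hw⟩, rfl⟩

theorem witt_aux (a0 a1 : V →ₗ[ℝ] V →ₗ[ℝ] ℝ)
    (hn0 : ∀ u, (∀ v, a0 u v = 0) → u = 0) (hn1 : ∀ u, (∀ v, a1 u v = 0) → u = 0)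
    (hs0 : ∀ u v, a0 u v = - a0 v u) (hs1 : ∀ u v, a1 u v = - a1 v u) (n : ℕ) :
    ∀ (W : Submodule ℝ V) (L : V →ₗ[ℝ] V), Module.finrank ℝ V ≤ Module.finrank ℝ W + n →
    (∀ u ∈ W, L u = 0 → u = 0) → (∀ u ∈ W, ∀ v ∈ W, a1 (L u) (L v) = a0 u v) →
    ∃ L' : V →ₗ[ℝ] V, (∀ w ∈ W, L' w = L w) ∧ ∀ u v, a1 (L' u) (L' v) = a0 u v := by
  induction n with
  | zero =>
    intro W L hd _ hiso
    have hW : W = ⊤ := Submodule.eq_top_of_finrank_eq (le_antisymm W.finrank_le (by simpa using hd))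
    subst hW
    exact ⟨L, fun _ _ => rfl, fun u v => hiso u trivial v trivial⟩
  | succ n ih =>
    intro W L hd hinj hiso
    by_cases hW : W = ⊤
    · subst hW
      exact ⟨L, fun _ _ => rfl, fun u v => hiso u trivial v trivial⟩
    obtain ⟨v, hv⟩ : ∃ v, v ∉ W := by
      by_contra! h
      exact hW (Submodule.eq_top_iff'.2 h)
    obtain ⟨w', hw', hw'L⟩ := witt_step a0 a1 hn0 hn1 W L hinj hiso v hv
    obtain ⟨φ, hφv, hφ⟩ := Submodule.exists_le_ker_of_notMem hv
    let L1 : V →ₗ[ℝ] V := L + ((φ v)⁻¹ • φ).smulRight (w' - L v)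
    have hL1W : ∀ w ∈ W, L1 w = L w := by
      intro w hw
      have : φ w = 0 := hφ hw
      simp [L1, this]
    have hL1v : L1 v = w' := by
      simp [L1, hφv]
    have hmem : ∀ u ∈ W ⊔ Submodule.span ℝ {v}, ∃ w ∈ W, ∃ c : ℝ, u = w + c • v := by
      intro u hu
      obtain ⟨w, hw, y, hy, rfl⟩ := Submodule.mem_sup.1 hu
      obtain ⟨c, rfl⟩ := Submodule.mem_span_singleton.1 hy
      exact ⟨w, hw, c, rfl⟩
    have hv0 : a0 v v = 0 := by linarith [hs0 v v]
    have hw0 : a1 w' w' = 0 := by linarith [hs1 w' w']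
    have hA : Module.finrank ℝ V ≤ Module.finrank ℝ (W ⊔ Submodule.span ℝ {v} : Submodule ℝ V) + n := by
      have hlt : W < W ⊔ Submodule.span ℝ {v} := by
        refine lt_of_le_of_ne le_sup_left fun h => hv ?_
        rw [h]
        exact Submodule.mem_sup_right (Submodule.mem_span_singleton_self v)
      have := Submodule.finrank_lt_finrank_of_lt hlt
      omega
    have hB : ∀ u ∈ W ⊔ Submodule.span ℝ {v}, L1 u = 0 → u = 0 := by
      intro u hu h0
      obtain ⟨w, hw, c, rfl⟩ := hmem u hu
      rw [map_add, map_smul, hL1v, hL1W w hw] at h0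
      by_cases hc : c = 0
      · subst hc
        simp at h0 ⊢
        exact hinj w hw h0
      · exfalso
        apply hw'L
        refine ⟨-(c⁻¹ • w), W.neg_mem (W.smul_mem _ hw), ?_⟩
        have : L w = -(c • w') := eq_neg_of_add_eq_zero_left h0
        rw [map_neg, map_smul, this, smul_neg, neg_neg, smul_smul, inv_mul_cancel₀ hc, one_smul]
    have hC : ∀ u ∈ W ⊔ Submodule.span ℝ {v}, ∀ u' ∈ W ⊔ Submodule.span ℝ {v}, a1 (L1 u) (L1 u') = a0 u u' := by
      intro u hu u' hu'
      obtain ⟨w, hw, c, rfl⟩ := hmem u hu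
      obtain ⟨w2, hw2, c2, rfl⟩ := hmem u' hu'
      simp only [map_add, map_smul, hL1v, hL1W w hw, hL1W w2 hw2, LinearMap.add_apply,
        LinearMap.smul_apply, smul_eq_mul, hiso w hw w2 hw2, hw' w2 hw2, hv0, hw0]
      rw [hs1 (L w) w', hw' w hw, hs0 w v]
    obtain ⟨L', hL', hL'iso⟩ := ih (W ⊔ Submodule.span ℝ {v}) L1 hA hB hC
    refine ⟨L', fun w hw => ?_, hL'iso⟩
    rw [hL' w (Submodule.mem_sup_left hw), hL1W w hw]

theorem witt (a0 a1 : V →ₗ[ℝ] V →ₗ[ℝ] ℝ)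
    (hn0 : ∀ u, (∀ v, a0 u v = 0) → u = 0) (hn1 : ∀ u, (∀ v, a1 u v = 0) → u = 0)
    (hs0 : ∀ u v, a0 u v = - a0 v u) (hs1 : ∀ u v, a1 u v = - a1 v u)
    (W : Submodule ℝ V) (h : ∀ u ∈ W, ∀ v ∈ W, a1 u v = a0 u v) :
    ∃ L : V →ₗ[ℝ] V, (∀ w ∈ W, L w = w) ∧ ∀ u v, a1 (L u) (L v) = a0 u v := by
  obtain ⟨L, h1, h2⟩ := witt_aux a0 a1 hn0 hn1 hs0 hs1 (Module.finrank ℝ V) W LinearMap.id (by omega)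
    (fun u _ h => h) (fun u hu v hv => h u hu v hv)
  exact ⟨L, fun w hw => h1 w hw, h2⟩

end Witt

section Pull
variable {E : Type} [NormedAddCommGroup E] [NormedSpace ℝ E]

theorem eval2_fderiv (ω : E → E →L[ℝ] E →L[ℝ] ℝ) (x u v w : E) (h : DifferentiableAt ℝ ω x) :
    fderiv ℝ (fun y => ω y v w) x u = fderiv ℝ ω x u v w := by
  have h1 := (h.hasFDerivAt.clm_apply (hasFDerivAt_const v x)).clm_apply (hasFDerivAt_const w x)
  rw [h1.fderiv]
  simp

theorem eval1_fderiv (β : E → E →L[ℝ] ℝ) (x u v : E) (h : DifferentiableAt ℝ β x) :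
    fderiv ℝ (fun y => β y v) x u = fderiv ℝ β x u v := by
  have h1 := h.hasFDerivAt.clm_apply (hasFDerivAt_const v x)
  rw [h1.fderiv]
  simp

theorem symm2 {F : Type} [NormedAddCommGroup F] [NormedSpace ℝ F] (Θ : E → F)
    (hΘ : ContDiff ℝ (⊤ : ℕ∞) Θ) (x u v : E) :
    fderiv ℝ (fderiv ℝ Θ) x u v = fderiv ℝ (fderiv ℝ Θ) x v u := by
  have h := (hΘ.contDiffAt (x := x)).isSymmSndFDerivAt (by simp only [minSmoothness_of_isRCLikeNormedField]; exact WithTop.coe_le_coe.2 (le_top : (2 : ℕ∞) ≤ ⊤))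
  exact h.eq u v

theorem fderiv_smooth {F : Type} [NormedAddCommGroup F] [NormedSpace ℝ F] (Θ : E → F)
    (hΘ : ContDiff ℝ (⊤ : ℕ∞) Θ) : ContDiff ℝ (⊤ : ℕ∞) (fderiv ℝ Θ) :=
  hΘ.fderiv_right (by simp)

theorem closed_of_eq (ω0 ω1 α : E → E →L[ℝ] E →L[ℝ] ℝ) (β : E → E →L[ℝ] ℝ)
    (hω0 : ContDiff ℝ (⊤ : ℕ∞) ω0) (hω1 : ContDiff ℝ (⊤ : ℕ∞) ω1) (hα : ContDiff ℝ (⊤ : ℕ∞) α)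
    (hβ : ContDiff ℝ (⊤ : ℕ∞) β)
    (hc0 : ∀ᶠ x in 𝓝 0, ∀ u v w,
      fderiv ℝ ω0 x u v w - fderiv ℝ ω0 x v u w + fderiv ℝ ω0 x w u v = 0)
    (hc1 : ∀ᶠ x in 𝓝 0, ∀ u v w,
      fderiv ℝ ω1 x u v w - fderiv ℝ ω1 x v u w + fderiv ℝ ω1 x w u v = 0)
    (h : ∀ᶠ x in 𝓝 0, ∀ u v, ω0 x u v - ω1 x u v = α x u v + (fderiv ℝ β x u v - fderiv ℝ β x v u)) :
    ∀ᶠ x in 𝓝 0, ∀ u v w,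
      fderiv ℝ α x u v w - fderiv ℝ α x v u w + fderiv ℝ α x w u v = 0 := by
  have hβ' := fderiv_smooth β hβ
  filter_upwards [eventually_eventually_nhds.2 h, hc0, hc1] with x hx hc0 hc1 u v w
  have d0 : DifferentiableAt ℝ ω0 x := hω0.differentiable (by simp) x
  have d1 : DifferentiableAt ℝ ω1 x := hω1.differentiable (by simp) x
  have dα : DifferentiableAt ℝ α x := hα.differentiable (by simp) x
  have dβ : DifferentiableAt ℝ (fderiv ℝ β) x := hβ'.differentiable (by simp) x
  have ev : ∀ (ω : E → E →L[ℝ] E →L[ℝ] ℝ) (v w : E), DifferentiableAt ℝ ω x →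
      DifferentiableAt ℝ (fun y => ω y v w) x := fun ω v w hd =>
    (hd.clm_apply (differentiableAt_const v)).clm_apply (differentiableAt_const w)
  have key : ∀ u v w, fderiv ℝ ω0 x u v w - fderiv ℝ ω1 x u v w = fderiv ℝ α x u v w +
      (fderiv ℝ (fderiv ℝ β) x u v w - fderiv ℝ (fderiv ℝ β) x u w v) := by
    intro u v w
    have e : (fun y => ω0 y v w - ω1 y v w) =ᶠ[𝓝 x]
        fun y => α y v w + (fderiv ℝ β y v w - fderiv ℝ β y w v) := by
      filter_upwards [hx] with y hy using hy v w
    have e2 := congrArg (fun l : E →L[ℝ] ℝ => l u) e.fderiv_eq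
    have s1 : fderiv ℝ (fun y => ω0 y v w - ω1 y v w) x =
      fderiv ℝ (fun y => ω0 y v w) x - fderiv ℝ (fun y => ω1 y v w) x :=
      fderiv_fun_sub (ev ω0 v w d0) (ev ω1 v w d1)
    have s2 : fderiv ℝ (fun y => α y v w + (fderiv ℝ β y v w - fderiv ℝ β y w v)) x =
      fderiv ℝ (fun y => α y v w) x + fderiv ℝ (fun y => (fderiv ℝ β y v w - fderiv ℝ β y w v)) x :=
      fderiv_fun_add (ev α v w dα) ((ev _ v w dβ).sub (ev _ w v dβ))
    have s3 : fderiv ℝ (fun y => (fderiv ℝ β y v w - fderiv ℝ β y w v)) x =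
      fderiv ℝ (fun y => fderiv ℝ β y v w) x - fderiv ℝ (fun y => fderiv ℝ β y w v) x :=
      fderiv_fun_sub (ev _ v w dβ) (ev _ w v dβ)
    rw [s1, s2, s3] at e2
    simp only [ContinuousLinearMap.add_apply, ContinuousLinearMap.sub_apply] at e2
    rw [eval2_fderiv ω0 x u v w d0, eval2_fderiv ω1 x u v w d1, eval2_fderiv α x u v w dα,
      eval2_fderiv _ x u v w dβ, eval2_fderiv _ x u w v dβ] at e2
    exact e2
  have s1 := congrArg (fun l : E →L[ℝ] ℝ => l w) (symm2 β hβ x u v)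
  have s2 := congrArg (fun l : E →L[ℝ] ℝ => l u) (symm2 β hβ x w v)
  have s3 := congrArg (fun l : E →L[ℝ] ℝ => l v) (symm2 β hβ x w u)
  linear_combination -key u v w + key v u w - key w u v + hc0 u v w - hc1 u v w - s1 + s2 - s3

/-- pullback of bundled two-forms -/
noncomputable def pb (Θ : E → E) (ω : E → E →L[ℝ] E →L[ℝ] ℝ) (x : E) : E →L[ℝ] E →L[ℝ] ℝ :=
  (ω (Θ x)).bilinearComp (fderiv ℝ Θ x) (fderiv ℝ Θ x)

/-- pullback of bundled one-forms -/
noncomputable def pb1 (Θ : E → E) (β : E → E →L[ℝ] ℝ) (x : E) : E →L[ℝ] ℝ :=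
  (β (Θ x)).comp (fderiv ℝ Θ x)

theorem pb_apply (Θ : E → E) (ω : E → E →L[ℝ] E →L[ℝ] ℝ) (x u v : E) :
    pb Θ ω x u v = ω (Θ x) (fderiv ℝ Θ x u) (fderiv ℝ Θ x v) := rfl

theorem pb1_apply (Θ : E → E) (β : E → E →L[ℝ] ℝ) (x u : E) :
    pb1 Θ β x u = β (Θ x) (fderiv ℝ Θ x u) := rfl

variable [FiniteDimensional ℝ E]

theorem pb_contDiff (Θ : E → E) (ω : E → E →L[ℝ] E →L[ℝ] ℝ) (hΘ : ContDiff ℝ (⊤ : ℕ∞) Θ)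
    (hω : ContDiff ℝ (⊤ : ℕ∞) ω) : ContDiff ℝ (⊤ : ℕ∞) (pb Θ ω) := by
  have hΘ' := fderiv_smooth Θ hΘ
  rw [contDiff_clm_apply_iff]
  intro u
  rw [contDiff_clm_apply_iff]
  intro v
  exact ((hω.comp hΘ).clm_apply (hΘ'.clm_apply contDiff_const)).clm_apply
    (hΘ'.clm_apply contDiff_const)

theorem pb1_contDiff (Θ : E → E) (β : E → E →L[ℝ] ℝ) (hΘ : ContDiff ℝ (⊤ : ℕ∞) Θ)
    (hβ : ContDiff ℝ (⊤ : ℕ∞) β) : ContDiff ℝ (⊤ : ℕ∞) (pb1 Θ β) := by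
  have hΘ' := fderiv_smooth Θ hΘ
  rw [contDiff_clm_apply_iff]
  intro u
  exact (hβ.comp hΘ).clm_apply (hΘ'.clm_apply contDiff_const)

theorem pb_fderiv (Θ : E → E) (ω : E → E →L[ℝ] E →L[ℝ] ℝ) (hΘ : ContDiff ℝ (⊤ : ℕ∞) Θ)
    (hω : ContDiff ℝ (⊤ : ℕ∞) ω) (x u v w : E) :
    fderiv ℝ (pb Θ ω) x u v w =
      fderiv ℝ ω (Θ x) (fderiv ℝ Θ x u) (fderiv ℝ Θ x v) (fderiv ℝ Θ x w) +
      ω (Θ x) (fderiv ℝ (fderiv ℝ Θ) x u v) (fderiv ℝ Θ x w) +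
      ω (Θ x) (fderiv ℝ Θ x v) (fderiv ℝ (fderiv ℝ Θ) x u w) := by
  have hΘ' := fderiv_smooth Θ hΘ
  rw [← eval2_fderiv (pb Θ ω) x u v w ((pb_contDiff Θ ω hΘ hω).differentiable (by simp) x)]
  have h1 : HasFDerivAt (fun y => ω (Θ y)) ((fderiv ℝ ω (Θ x)).comp (fderiv ℝ Θ x)) x :=
    (hω.differentiable (by simp) (Θ x)).hasFDerivAt.comp x (hΘ.differentiable (by simp) x).hasFDerivAt
  have hT : ∀ v, HasFDerivAt (fun y => fderiv ℝ Θ y v) ((fderiv ℝ (fderiv ℝ Θ) x).flip v) x := by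
    intro v
    have := (hΘ'.differentiable (by simp) x).hasFDerivAt.clm_apply (hasFDerivAt_const v x)
    refine this.congr_fderiv ?_
    ext u
    simp
  have h2 := (h1.clm_apply (hT v)).clm_apply (hT w)
  have h3 : HasFDerivAt (fun y => pb Θ ω y v w) _ x := h2
  rw [h3.fderiv]
  simp
  ring

theorem pb1_fderiv (Θ : E → E) (β : E → E →L[ℝ] ℝ) (hΘ : ContDiff ℝ (⊤ : ℕ∞) Θ)
    (hβ : ContDiff ℝ (⊤ : ℕ∞) β) (x u v : E) :
    fderiv ℝ (pb1 Θ β) x u v =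
      fderiv ℝ β (Θ x) (fderiv ℝ Θ x u) (fderiv ℝ Θ x v) +
      β (Θ x) (fderiv ℝ (fderiv ℝ Θ) x u v) := by
  have hΘ' := fderiv_smooth Θ hΘ
  rw [← eval1_fderiv (pb1 Θ β) x u v ((pb1_contDiff Θ β hΘ hβ).differentiable (by simp) x)]
  have h1 : HasFDerivAt (fun y => β (Θ y)) ((fderiv ℝ β (Θ x)).comp (fderiv ℝ Θ x)) x :=
    (hβ.differentiable (by simp) (Θ x)).hasFDerivAt.comp x (hΘ.differentiable (by simp) x).hasFDerivAt
  have hT : ∀ v, HasFDerivAt (fun y => fderiv ℝ Θ y v) ((fderiv ℝ (fderiv ℝ Θ) x).flip v) x := by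
    intro v
    have := (hΘ'.differentiable (by simp) x).hasFDerivAt.clm_apply (hasFDerivAt_const v x)
    refine this.congr_fderiv ?_
    ext u
    simp
  have h2 := h1.clm_apply (hT v)
  have h3 : HasFDerivAt (fun y => pb1 Θ β y v) _ x := h2
  rw [h3.fderiv]
  simp
  ring

theorem pb_closed (Θ : E → E) (ω : E → E →L[ℝ] E →L[ℝ] ℝ) (hΘ : ContDiff ℝ (⊤ : ℕ∞) Θ)
    (hω : ContDiff ℝ (⊤ : ℕ∞) ω) (hΘ0 : Θ 0 = 0)
    (ha : ∀ᶠ x in 𝓝 0, ∀ u v, ω x u v = - ω x v u)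
    (hc : ∀ᶠ x in 𝓝 0, ∀ u v w,
      fderiv ℝ ω x u v w - fderiv ℝ ω x v u w + fderiv ℝ ω x w u v = 0) :
    ∀ᶠ x in 𝓝 0, ∀ u v w,
      fderiv ℝ (pb Θ ω) x u v w - fderiv ℝ (pb Θ ω) x v u w + fderiv ℝ (pb Θ ω) x w u v = 0 := by
  have ht : Tendsto Θ (𝓝 0) (𝓝 0) := by
    have := hΘ.continuous.tendsto 0
    rwa [hΘ0] at this
  filter_upwards [ht.eventually ha, ht.eventually hc] with x ha hc u v w
  rw [pb_fderiv Θ ω hΘ hω, pb_fderiv Θ ω hΘ hω, pb_fderiv Θ ω hΘ hω,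
    symm2 Θ hΘ x v u, symm2 Θ hΘ x w u, symm2 Θ hΘ x w v]
  linear_combination hc (fderiv ℝ Θ x u) (fderiv ℝ Θ x v) (fderiv ℝ Θ x w) +
    ha (fderiv ℝ Θ x v) (fderiv ℝ (fderiv ℝ Θ) x u w)

theorem pb_antisymm (Θ : E → E) (ω : E → E →L[ℝ] E →L[ℝ] ℝ) (hΘ : ContinuousAt Θ 0)
    (hΘ0 : Θ 0 = 0) (ha : ∀ᶠ x in 𝓝 0, ∀ u v, ω x u v = - ω x v u) :
    ∀ᶠ x in 𝓝 0, ∀ u v, pb Θ ω x u v = - pb Θ ω x v u := by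
  have ht : Tendsto Θ (𝓝 0) (𝓝 0) := by
    have := hΘ.tendsto
    rwa [hΘ0] at this
  filter_upwards [ht.eventually ha] with x ha u v
  exact ha _ _

theorem pb1_d (Θ : E → E) (β : E → E →L[ℝ] ℝ) (hΘ : ContDiff ℝ (⊤ : ℕ∞) Θ)
    (hβ : ContDiff ℝ (⊤ : ℕ∞) β) (x u v : E) :
    fderiv ℝ (pb1 Θ β) x u v - fderiv ℝ (pb1 Θ β) x v u =
      fderiv ℝ β (Θ x) (fderiv ℝ Θ x u) (fderiv ℝ Θ x v)
      - fderiv ℝ β (Θ x) (fderiv ℝ Θ x v) (fderiv ℝ Θ x u) := by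
  rw [pb1_fderiv Θ β hΘ hβ, pb1_fderiv Θ β hΘ hβ, symm2 Θ hΘ x v u]
  ring

end Pull

section Mono
variable {m : ℕ}

/-- diagonal operator -/
noncomputable def dg (d : Fin m → ℝ) : (Fin m → ℝ) →L[ℝ] (Fin m → ℝ) :=
  ContinuousLinearMap.pi fun i => d i • ContinuousLinearMap.proj i

theorem dg_apply (d x : Fin m → ℝ) (i : Fin m) : dg d x i = d i * x i := by
  simp [dg]

theorem dg_contDiff (d : ℝ → Fin m → ℝ) (hd : ∀ i, ContDiff ℝ (⊤ : ℕ∞) (fun s => d s i)) :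
    ContDiff ℝ (⊤ : ℕ∞) (fun s => dg (d s)) := by
  rw [contDiff_clm_apply_iff]
  intro x
  rw [contDiff_pi]
  intro i
  simp only [dg_apply]
  exact (hd i).mul contDiff_const

/-- the span of the curve -/
def Wk (m k : ℕ) : Submodule ℝ (Fin m → ℝ) where
  carrier := {x | ∀ i : Fin m, ¬ (i : ℕ) < k → x i = 0}
  add_mem' := by
    intro a b ha hb i hi
    simp [ha i hi, hb i hi]
  zero_mem' := by intro i _; rfl
  smul_mem' := by
    intro c a ha i hi
    simp [ha i hi]

theorem mono_mem (m k : ℕ) (μ : Fin k → ℕ) (t : ℝ) : mono m k μ t ∈ Wk m k := by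
  intro i hi
  simp [mono, hi]

theorem lemmaA' (k : ℕ) (μ : Fin k → ℕ) (hμ : ∀ i, 0 < μ i)
    (hlin : ∀ j : Fin k, ∀ c : Fin k → ℕ, μ j ≠ ∑ i ∈ Finset.univ.erase j, c i * μ i)
    (β : (Fin m → ℝ) → (Fin m → ℝ) →L[ℝ] ℝ) (hβ : ContDiff ℝ (⊤ : ℕ∞) β)
    (h0 : ∀ᶠ t in 𝓝 0, β (mono m k μ t) = 0) (u : Fin m → ℝ) (hu : u ∈ Wk m k) :
    fderiv ℝ β 0 u = 0 := by
  ext v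
  rw [← eval1_fderiv β 0 u v (hβ.differentiable (by simp) 0)]
  have hc : ContDiff ℝ (⊤ : ℕ∞) (fun y => β y v) := hβ.clm_apply contDiff_const
  rw [← Finset.univ_sum_single u, map_sum]
  apply Finset.sum_eq_zero
  intro i _
  by_cases hi : (i : ℕ) < k
  · have h1 := lemmaA m k μ hμ hlin (fun y => β y v) hc (by
      filter_upwards [h0] with t ht
      simp [ht]) i hi
    have : (Pi.single i (u i) : Fin m → ℝ) = u i • Pi.single i 1 := by
      rw [← Pi.single_smul]
      simp
    rw [this, map_smul, h1, smul_zero]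
  · rw [hu i hi, Pi.single_zero, map_zero]

theorem weight_primitive (k : ℕ) (μ : Fin k → ℕ) (hμ : ∀ i, 0 < μ i)
    (α : (Fin m → ℝ) → (Fin m → ℝ) →L[ℝ] (Fin m → ℝ) →L[ℝ] ℝ) (hα : ContDiff ℝ (⊤ : ℕ∞) α)
    (ha : ∀ᶠ x in 𝓝 0, ∀ u v, α x u v = - α x v u)
    (hc : ∀ᶠ x in 𝓝 0, ∀ u v w,
      fderiv ℝ α x u v w - fderiv ℝ α x v u w + fderiv ℝ α x w u v = 0)
    (h0 : ∀ᶠ t in 𝓝 0, α (mono m k μ t) = 0) :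
    ∃ γ : (Fin m → ℝ) → (Fin m → ℝ) →L[ℝ] ℝ, ContDiff ℝ (⊤ : ℕ∞) γ ∧
      (∀ᶠ t in 𝓝 0, γ (mono m k μ t) = 0) ∧
      ∀ᶠ x in 𝓝 0, ∀ u v, fderiv ℝ γ x u v - fderiv ℝ γ x v u = α x u v := by
  let d : ℝ → Fin m → ℝ := fun s i => if h : (i : ℕ) < k then s ^ μ ⟨i, h⟩ else s
  let h : ℝ → (Fin m → ℝ) →L[ℝ] (Fin m → ℝ) := fun s => dg (d s)
  have hh : ContDiff ℝ (⊤ : ℕ∞) h := by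
    apply dg_contDiff
    intro i
    by_cases hi : (i : ℕ) < k
    · simp only [d, hi, dif_pos]
      exact contDiff_id.pow _
    · simp only [d, hi]
      exact contDiff_id
  have hh1 : ∀ x, h 1 x = x := by
    intro x; ext i
    by_cases hi : (i : ℕ) < k <;> simp [h, dg_apply, d, hi]
  have hh0 : ∀ x, h 0 x = 0 := by
    intro x; ext i
    by_cases hi : (i : ℕ) < k
    · simp [h, dg_apply, d, hi, (hμ ⟨i, hi⟩).ne']
    · simp [h, dg_apply, d, hi]
  have hhg : ∀ s t, h s (mono m k μ t) = mono m k μ (s * t) := by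
    intro s t; ext i
    by_cases hi : (i : ℕ) < k
    · simp [h, dg_apply, d, hi, mono, mul_pow]
    · simp [h, dg_apply, d, hi, mono]
  refine ⟨ho α h, ho_contDiff α h hα hh, ?_, ?_⟩
  · obtain ⟨ε, hε, hb⟩ := Metric.eventually_nhds_iff_ball.1 h0
    filter_upwards [Metric.ball_mem_nhds (0:ℝ) hε] with t ht
    ext v
    rw [ho_apply α h hα hh]
    simp only [hhg]
    rw [intervalIntegral.integral_congr (g := fun _ => (0:ℝ))]
    · simp
    · intro s hs
      rw [Set.uIcc_of_le zero_le_one] at hs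
      have : α (mono m k μ (s * t)) = 0 := by
        apply hb
        rw [Metric.mem_ball, dist_zero_right, Real.norm_eq_abs] at ht ⊢
        rw [abs_mul, abs_of_nonneg hs.1]
        nlinarith [abs_nonneg t, hs.2]
      simp [this]
  · filter_upwards [ho_d α h hα hh ha hc] with x hx u v
    rw [hx u v]
    simp [hh1, hh0]

theorem rel_primitive (k : ℕ)
    (κ : (Fin m → ℝ) → (Fin m → ℝ) →L[ℝ] (Fin m → ℝ) →L[ℝ] ℝ) (hκ : ContDiff ℝ (⊤ : ℕ∞) κ)
    (ha : ∀ᶠ x in 𝓝 0, ∀ u v, κ x u v = - κ x v u)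
    (hc : ∀ᶠ x in 𝓝 0, ∀ u v w,
      fderiv ℝ κ x u v w - fderiv ℝ κ x v u w + fderiv ℝ κ x w u v = 0)
    (h0 : ∀ x ∈ Wk m k, ∀ u ∈ Wk m k, ∀ v ∈ Wk m k, κ x u v = 0) :
    ∃ γ : (Fin m → ℝ) → (Fin m → ℝ) →L[ℝ] ℝ, ContDiff ℝ (⊤ : ℕ∞) γ ∧
      (∀ x ∈ Wk m k, γ x = 0) ∧
      ∀ᶠ x in 𝓝 0, ∀ u v, fderiv ℝ γ x u v - fderiv ℝ γ x v u = κ x u v := by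
  let d : ℝ → Fin m → ℝ := fun s i => if (i : ℕ) < k then 1 else s
  let h : ℝ → (Fin m → ℝ) →L[ℝ] (Fin m → ℝ) := fun s => dg (d s)
  have hh : ContDiff ℝ (⊤ : ℕ∞) h := by
    apply dg_contDiff
    intro i
    by_cases hi : (i : ℕ) < k
    · simp only [d, hi, if_pos]
      exact contDiff_const
    · simp only [d, hi]
      exact contDiff_id
  have hh1 : ∀ x, h 1 x = x := by
    intro x; ext i
    by_cases hi : (i : ℕ) < k <;> simp [h, dg_apply, d, hi]
  have hh0 : ∀ x, h 0 x ∈ Wk m k := by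
    intro x i hi
    simp [h, dg_apply, d, hi]
  have hhW : ∀ x ∈ Wk m k, ∀ s, h s x = x := by
    intro x hx s; ext i
    by_cases hi : (i : ℕ) < k
    · simp [h, dg_apply, d, hi]
    · simp [h, dg_apply, d, hi, hx i hi]
  refine ⟨ho κ h, ho_contDiff κ h hκ hh, ?_, ?_⟩
  · intro x hx
    ext v
    rw [ho_apply κ h hκ hh]
    have hd : ∀ s, deriv h s x = 0 := by
      intro s
      have h1 : HasDerivAt h (deriv h s) s := (hh.differentiable (by simp) s).hasDerivAt
      have h2 := h1.clm_apply (hasDerivAt_const s x)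
      simp only [hhW x hx] at h2
      have h3 := h2.unique (hasDerivAt_const s x)
      simpa using h3
    simp [hd]
  · filter_upwards [ho_d κ h hκ hh ha hc] with x hx u v
    rw [hx u v, h0 _ (hh0 x) _ (hh0 u) _ (hh0 v)]
    simp [hh1]

end Mono

theorem nondeg_equiv {E : Type} [NormedAddCommGroup E] [NormedSpace ℝ E] [FiniteDimensional ℝ E]
    (a : E →L[ℝ] E →L[ℝ] ℝ) (hn : ∀ u, (∀ v, a u v = 0) → u = 0) :
    ∃ A : E ≃L[ℝ] (E →L[ℝ] ℝ), a = A := by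
  have hinj : Function.Injective (a : E →ₗ[ℝ] (E →L[ℝ] ℝ)) := by
    rw [← LinearMap.ker_eq_bot, LinearMap.ker_eq_bot']
    intro u hu
    apply hn u
    intro v
    have : a u = 0 := hu
    simp [this]
  have hfr : Module.finrank ℝ E = Module.finrank ℝ (E →L[ℝ] ℝ) := by
    rw [← Subspace.dual_finrank_eq (K := ℝ) (V := E)]
    exact (LinearMap.toContinuousLinearMap (𝕜 := ℝ) (E := E) (F' := ℝ)).finrank_eq
  have hsurj := (LinearMap.injective_iff_surjective_of_finrank_eq_finrank hfr).1 hinj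
  refine ⟨(LinearEquiv.ofBijective (a : E →ₗ[ℝ] (E →L[ℝ] ℝ)) ⟨hinj, hsurj⟩).toContinuousLinearEquiv, ?_⟩
  ext u v
  rfl

section gen
variable {E W : Type} [NormedAddCommGroup E] [NormedSpace ℝ E] [NormedAddCommGroup W] [NormedSpace ℝ W]

theorem gsub (f g : E → W) (hf : ContDiff ℝ (⊤ : ℕ∞) f) (hg : ContDiff ℝ (⊤ : ℕ∞) g) :
    ContDiff ℝ (⊤ : ℕ∞) (fun x => f x - g x) := hf.sub hg

theorem gadd (f g : E → W) (hf : ContDiff ℝ (⊤ : ℕ∞) f) (hg : ContDiff ℝ (⊤ : ℕ∞) g) :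
    ContDiff ℝ (⊤ : ℕ∞) (fun x => f x + g x) := hf.add hg

theorem gsub_fderiv (f g : E → W) (hf : ContDiff ℝ (⊤ : ℕ∞) f) (hg : ContDiff ℝ (⊤ : ℕ∞) g) (x u : E) :
    fderiv ℝ (fun x => f x - g x) x u = fderiv ℝ f x u - fderiv ℝ g x u := by
  rw [fderiv_fun_sub (hf.differentiable (by simp) x) (hg.differentiable (by simp) x)]
  rfl

theorem gadd_fderiv (f g : E → W) (hf : ContDiff ℝ (⊤ : ℕ∞) f) (hg : ContDiff ℝ (⊤ : ℕ∞) g) (x u : E) :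
    fderiv ℝ (fun x => f x + g x) x u = fderiv ℝ f x u + fderiv ℝ g x u := by
  rw [fderiv_fun_add (hf.differentiable (by simp) x) (hg.differentiable (by simp) x)]
  rfl

theorem clm_ev (f g : E →L[ℝ] W) (v : E) : (f - g) v = f v - g v := rfl
theorem clm_ev' (f g : E →L[ℝ] W) (v : E) : (f + g) v = f v + g v := rfl

end gen

theorem mono_case (m k : ℕ) (μ : Fin k → ℕ) (hμ : ∀ i, 0 < μ i)
    (hlin : ∀ j : Fin k, ∀ c : Fin k → ℕ, μ j ≠ ∑ i ∈ Finset.univ.erase j, c i * μ i)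
    (ω0 ω1 α : (Fin m → ℝ) → (Fin m → ℝ) →L[ℝ] (Fin m → ℝ) →L[ℝ] ℝ)
    (β : (Fin m → ℝ) → (Fin m → ℝ) →L[ℝ] ℝ)
    (hω0 : ContDiff ℝ (⊤ : ℕ∞) ω0) (hω1 : ContDiff ℝ (⊤ : ℕ∞) ω1) (hα : ContDiff ℝ (⊤ : ℕ∞) α)
    (hβ : ContDiff ℝ (⊤ : ℕ∞) β)
    (ha0 : ∀ᶠ x in 𝓝 0, ∀ u v, ω0 x u v = - ω0 x v u)
    (ha1 : ∀ᶠ x in 𝓝 0, ∀ u v, ω1 x u v = - ω1 x v u)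
    (haα : ∀ᶠ x in 𝓝 0, ∀ u v, α x u v = - α x v u)
    (hc0 : ∀ᶠ x in 𝓝 0, ∀ u v w,
      fderiv ℝ ω0 x u v w - fderiv ℝ ω0 x v u w + fderiv ℝ ω0 x w u v = 0)
    (hc1 : ∀ᶠ x in 𝓝 0, ∀ u v w,
      fderiv ℝ ω1 x u v w - fderiv ℝ ω1 x v u w + fderiv ℝ ω1 x w u v = 0)
    (hn0 : ∀ u, (∀ v, ω0 0 u v = 0) → u = 0) (hn1 : ∀ u, (∀ v, ω1 0 u v = 0) → u = 0)
    (hα0 : ∀ᶠ t in 𝓝 0, α (mono m k μ t) = 0) (hβ0 : ∀ᶠ t in 𝓝 0, β (mono m k μ t) = 0)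
    (h : ∀ᶠ x in 𝓝 0, ∀ u v, ω0 x u v - ω1 x u v = α x u v + (fderiv ℝ β x u v - fderiv ℝ β x v u)) :
    ∃ Φ : (Fin m → ℝ) → (Fin m → ℝ), (∀ᶠ x in 𝓝 0, ContDiffAt ℝ (⊤ : ℕ∞) Φ x) ∧
      (∀ᶠ t in 𝓝 0, Φ (mono m k μ t) = mono m k μ t) ∧
      ∀ᶠ x in 𝓝 0, ∀ u v, ω1 (Φ x) (fderiv ℝ Φ x u) (fderiv ℝ Φ x v) = ω0 x u v := by
  have hcα := closed_of_eq ω0 ω1 α β hω0 hω1 hα hβ hc0 hc1 h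
  obtain ⟨γα, hγα, hγα0, hγαd⟩ := weight_primitive k μ hμ α hα haα hcα hα0
  have hg0 := mono_zero m k μ hμ
  have hα00 : α 0 = 0 := by
    have := hα0.self_of_nhds
    rwa [hg0] at this
  -- the linear step
  have hres : ∀ u ∈ Wk m k, ∀ v ∈ Wk m k, ω1 0 u v = ω0 0 u v := by
    intro u hu v hv
    have h1 := h.self_of_nhds u v
    rw [hα00, lemmaA' k μ hμ hlin β hβ hβ0 u hu, lemmaA' k μ hμ hlin β hβ hβ0 v hv] at h1
    simp at h1
    linarith
  let toB : ((Fin m → ℝ) →L[ℝ] (Fin m → ℝ) →L[ℝ] ℝ) → (Fin m → ℝ) →ₗ[ℝ] (Fin m → ℝ) →ₗ[ℝ] ℝ :=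
    fun a => LinearMap.mk₂ ℝ (fun u v => a u v) (by intros; simp) (by intros; simp)
      (by intros; simp) (by intros; simp)
  obtain ⟨L0, hL0W, hL0⟩ := witt (toB (ω0 0)) (toB (ω1 0)) hn0 hn1 ha0.self_of_nhds ha1.self_of_nhds
    (Wk m k) hres
  let L : (Fin m → ℝ) →L[ℝ] (Fin m → ℝ) := LinearMap.toContinuousLinearMap L0
  have hLW : ∀ x ∈ Wk m k, L x = x := hL0W
  have hL : ∀ u v, ω1 0 (L u) (L v) = ω0 0 u v := hL0
  have hLs : ContDiff ℝ (⊤ : ℕ∞) L := L.contDiff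
  have hLf : ∀ x, fderiv ℝ L x = L := fun x => L.fderiv
  have hL00 : L 0 = 0 := map_zero L
  have hp := pb_contDiff L ω1 hLs hω1
  have hpa := pb_antisymm L ω1 hLs.continuous.continuousAt hL00 ha1
  have hpc := pb_closed L ω1 hLs hω1 hL00 ha1 hc1
  have hpap : ∀ x u v, pb L ω1 x u v = ω1 (L x) (L u) (L v) := by
    intro x u v
    rw [pb_apply, hLf]
  -- second primitive
  obtain ⟨γ2, hγ2, hγ20, hγ2d⟩ := rel_primitive k (fun x => ω1 x - pb L ω1 x) (gsub _ _ hω1 hp)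
    (by
      filter_upwards [ha1, hpa] with x h1 h2 u v
      simp only [clm_ev]
      rw [h1 u v, h2 u v]
      ring)
    (by
      filter_upwards [hc1, hpc] with x h1 h2 u v w
      rw [gsub_fderiv _ _ hω1 hp, gsub_fderiv _ _ hω1 hp, gsub_fderiv _ _ hω1 hp]
      simp only [clm_ev]
      linear_combination h1 u v w - h2 u v w)
    (by
      intro x hx u hu v hv
      simp only [clm_ev]
      rw [hpap, hLW x hx, hLW u hu, hLW v hv, sub_self])
  let γ : (Fin m → ℝ) → (Fin m → ℝ) →L[ℝ] ℝ := fun x => (γα x + β x) + γ2 x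
  have hγ : ContDiff ℝ (⊤ : ℕ∞) γ := gadd _ _ (gadd _ _ hγα hβ) hγ2
  have hγ0 : ∀ᶠ t in 𝓝 0, γ (mono m k μ t) = 0 := by
    filter_upwards [hγα0, hβ0] with t h1 h2
    simp only [γ]
    rw [h1, h2, hγ20 _ (mono_mem m k μ t)]
    simp
  have hγd : ∀ᶠ x in 𝓝 0, ∀ u v, ω0 x u v - pb L ω1 x u v = fderiv ℝ γ x u v - fderiv ℝ γ x v u := by
    filter_upwards [h, hγαd, hγ2d] with x h1 h2 h3 u v
    simp only [γ]
    rw [gadd_fderiv _ _ (gadd _ _ hγα hβ) hγ2, gadd_fderiv _ _ (gadd _ _ hγα hβ) hγ2,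
      gadd_fderiv _ _ hγα hβ, gadd_fderiv _ _ hγα hβ]
    simp only [clm_ev']
    have h3' := h3 u v
    simp only [clm_ev] at h3'
    linear_combination h1 u v - h2 u v - h3'
  have hDW := lemmaA' k μ hμ hlin γ hγ hγ0
  have hDs : ∀ u v, fderiv ℝ γ 0 u v = fderiv ℝ γ 0 v u := by
    intro u v
    have h1 := hγd.self_of_nhds u v
    rw [hpap, hL00, hL] at h1
    linarith
  let D := fderiv ℝ γ 0
  let γ' : (Fin m → ℝ) → (Fin m → ℝ) →L[ℝ] ℝ := fun x => γ x - D x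
  have hD : ContDiff ℝ (⊤ : ℕ∞) D := D.contDiff
  have hDf : ∀ x, fderiv ℝ D x = D := fun x => D.fderiv
  have hγ' : ContDiff ℝ (⊤ : ℕ∞) γ' := gsub _ _ hγ hD
  have hγ'f : ∀ x u, fderiv ℝ γ' x u = fderiv ℝ γ x u - D u := by
    intro x u
    simp only [γ']
    rw [gsub_fderiv _ _ hγ hD, hDf]
  obtain ⟨A, hA⟩ := nondeg_equiv (ω0 0) hn0
  obtain ⟨Φ, hΦs, hΦfix, hΦ⟩ := moser ω0 (pb L ω1) γ' hω0 hp hγ' ha0 hpa hc0 hpc A hA (by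
      rw [← hA]
      ext1 u
      ext1 v
      rw [hpap, hL00, hL])
    (by
      have := hγ0.self_of_nhds
      rw [hg0] at this
      simp only [γ']
      rw [this, map_zero, sub_zero])
    (by
      ext1 u
      rw [hγ'f]
      exact sub_self _)
    (by
      filter_upwards [hγd] with x hx u v
      rw [hx u v, hγ'f, hγ'f, clm_ev, clm_ev]
      have := hDs u v
      simp only [D]
      linear_combination this)
  have hgt : Tendsto (mono m k μ) (𝓝 0) (𝓝 0) := by
    have := (mono_contDiff m k μ).continuous.tendsto 0
    rwa [hg0] at this
  refine ⟨fun x => L (Φ x), ?_, ?_, ?_⟩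
  · filter_upwards [hΦs] with x hx
    exact hLs.contDiffAt.comp x hx
  · filter_upwards [hgt.eventually hΦfix, hγ0] with t h1 h2
    rw [h1 ?_]
    · exact hLW _ (mono_mem m k μ t)
    · simp only [γ']
      have : D (mono m k μ t) = 0 := hDW _ (mono_mem m k μ t)
      rw [h2, this, sub_zero]
  · filter_upwards [hΦs, hΦ] with x hx h1 u v
    have hfd : fderiv ℝ (fun x => L (Φ x)) x = L.comp (fderiv ℝ Φ x) :=
      (L.hasFDerivAt.comp x (hx.differentiableAt (by simp)).hasFDerivAt).fderiv
    rw [hfd, ← h1 u v, hpap]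
    rfl

section bridge
variable {m : ℕ}

theorem lin_expand (F : (Fin m → ℝ) → ℝ) (hF : ∀ u₁ u₂ (c : ℝ), F (u₁ + c • u₂) = F u₁ + c * F u₂)
    (u : Fin m → ℝ) : F u = ∑ i, u i * F (Pi.single i 1) := by
  have h0 : F 0 = 0 := by
    have := hF 0 0 1
    simp at this
    exact this
  let G : (Fin m → ℝ) →ₗ[ℝ] ℝ :=
    { toFun := F
      map_add' := fun a b => by simpa using hF a b 1
      map_smul' := fun c a => by simpa [h0] using hF 0 a c }
  have : G u = ∑ i, u i * G (Pi.single i 1) := by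
    conv_lhs => rw [← Finset.univ_sum_single u]
    rw [map_sum]
    apply Finset.sum_congr rfl
    intro i _
    have : (Pi.single i (u i) : Fin m → ℝ) = u i • Pi.single i 1 := by
      rw [← Pi.single_smul]
      simp
    rw [this, map_smul, smul_eq_mul]
  exact this

theorem smooth_ev {V W : Type} [NormedAddCommGroup V] [NormedSpace ℝ V] [NormedAddCommGroup W]
    [NormedSpace ℝ W] (f : V → W) (a : V)
    (h : ∃ U ∈ 𝓝 a, ContDiffOn ℝ (⊤ : ℕ∞) f U) : ∀ᶠ x in 𝓝 a, ContDiffAt ℝ (⊤ : ℕ∞) f x := by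
  obtain ⟨U, hU, hf⟩ := h
  filter_upwards [eventually_mem_nhds_iff.2 hU] with x hx
  exact hf.contDiffAt hx

theorem gsum_smul {ι V W : Type} [Fintype ι] [NormedAddCommGroup V] [NormedSpace ℝ V]
    [NormedAddCommGroup W] [NormedSpace ℝ W] (f : ι → V → ℝ) (B : ι → W) (a : V)
    (h : ∀ i, ∀ᶠ x in 𝓝 a, ContDiffAt ℝ (⊤ : ℕ∞) (f i) x) :
    ∀ᶠ x in 𝓝 a, ContDiffAt ℝ (⊤ : ℕ∞) (fun x => ∑ i, f i x • B i) x := by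
  filter_upwards [eventually_all.2 h] with x hx
  apply ContDiffAt.sum
  intro i _
  exact (hx i).smul contDiffAt_const

theorem bundle1 (β : Form1 m) (h : IsForm1 m β) :
    ∃ b : (Fin m → ℝ) → (Fin m → ℝ) →L[ℝ] ℝ, ContDiff ℝ (⊤ : ℕ∞) b ∧
      ∀ᶠ x in 𝓝 0, ∀ u, b x u = β x u := by
  obtain ⟨hl, hs⟩ := h
  obtain ⟨b, hb, hb'⟩ := globalize _ (0 : Fin m → ℝ)
    (gsum_smul (fun i x => β x (Pi.single i 1))
      (fun i => (ContinuousLinearMap.proj i : (Fin m → ℝ) →L[ℝ] ℝ)) (0 : Fin m → ℝ)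
      (fun i => smooth_ev _ _ (hs _)))
  refine ⟨b, hb, ?_⟩
  filter_upwards [hb'] with x hx u
  rw [hx, lin_expand (β x) (hl x) u, ContinuousLinearMap.sum_apply]
  apply Finset.sum_congr rfl
  intro i _
  simp [mul_comm]

theorem bundle2 (ω : Form2 m) (h : IsForm2 m ω) :
    ∃ b : (Fin m → ℝ) → (Fin m → ℝ) →L[ℝ] (Fin m → ℝ) →L[ℝ] ℝ, ContDiff ℝ (⊤ : ℕ∞) b ∧
      ∀ᶠ x in 𝓝 0, ∀ u v, b x u v = ω x u v := by
  obtain ⟨hl, ha, hs⟩ := h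
  obtain ⟨b, hb, hb'⟩ := globalize _ (0 : Fin m → ℝ)
    (gsum_smul (fun (ij : Fin m × Fin m) x => ω x (Pi.single ij.1 1) (Pi.single ij.2 1))
      (fun ij => ((ContinuousLinearMap.proj ij.1 : (Fin m → ℝ) →L[ℝ] ℝ).smulRight
        (ContinuousLinearMap.proj ij.2 : (Fin m → ℝ) →L[ℝ] ℝ) :
          (Fin m → ℝ) →L[ℝ] (Fin m → ℝ) →L[ℝ] ℝ)) (0 : Fin m → ℝ)
      (fun ij => smooth_ev _ _ (hs _ _)))
  refine ⟨b, hb, ?_⟩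
  filter_upwards [hb'] with x hx u v
  have hr : ∀ w u₁ u₂ (c : ℝ), ω x w (u₁ + c • u₂) = ω x w u₁ + c * ω x w u₂ := by
    intro w u₁ u₂ c
    rw [ha x w, hl, ha x w u₁, ha x w u₂]
    ring
  rw [hx, lin_expand (fun u => ω x u v) (fun a b c => hl x a b v c) u,
    ContinuousLinearMap.sum_apply, ContinuousLinearMap.sum_apply, Fintype.sum_prod_type]
  apply Finset.sum_congr rfl
  intro i _
  rw [lin_expand (ω x (Pi.single i 1)) (hr _) v, Finset.mul_sum]
  apply Finset.sum_congr rfl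
  intro j _
  simp
  ring

theorem bridge_closed (ω : Form2 m) (b : (Fin m → ℝ) → (Fin m → ℝ) →L[ℝ] (Fin m → ℝ) →L[ℝ] ℝ)
    (hb : ContDiff ℝ (⊤ : ℕ∞) b) (h : ∀ᶠ x in 𝓝 0, ∀ u v, b x u v = ω x u v)
    (hc : Closed2 m ω) : ∀ᶠ x in 𝓝 0, ∀ u v w,
      fderiv ℝ b x u v w - fderiv ℝ b x v u w + fderiv ℝ b x w u v = 0 := by
  filter_upwards [eventually_eventually_nhds.2 h, hc] with x hx hc u v w
  have hd := hb.differentiable (by simp) x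
  have e : ∀ u v w, fderiv ℝ (fun y => ω y v w) x u = fderiv ℝ b x u v w := by
    intro u v w
    rw [← eval2_fderiv b x u v w hd]
    have : (fun y => ω y v w) =ᶠ[𝓝 x] fun y => b y v w := by
      filter_upwards [hx] with y hy using (hy v w).symm
    rw [this.fderiv_eq]
  have := hc u v w
  simp only [extD2, e] at this
  exact this

theorem bridge_d (β : Form1 m) (b : (Fin m → ℝ) → (Fin m → ℝ) →L[ℝ] ℝ)
    (hb : ContDiff ℝ (⊤ : ℕ∞) b) (h : ∀ᶠ x in 𝓝 0, ∀ u, b x u = β x u) :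
    ∀ᶠ x in 𝓝 0, ∀ u v, extD1 m β x u v = fderiv ℝ b x u v - fderiv ℝ b x v u := by
  filter_upwards [eventually_eventually_nhds.2 h] with x hx u v
  have hd := hb.differentiable (by simp) x
  have e : ∀ u v, fderiv ℝ (fun y => β y v) x u = fderiv ℝ b x u v := by
    intro u v
    rw [← eval1_fderiv b x u v hd]
    have : (fun y => β y v) =ᶠ[𝓝 x] fun y => b y v := by
      filter_upwards [hx] with y hy using (hy v).symm
    rw [this.fderiv_eq]
  simp only [extD1, e]

end bridge

theorem darboux_givental_aux
    (m : ℕ) (f : ℝ → (Fin m → ℝ)) (hf : IsCurveGerm m f)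
    (hq : IsQuasiHomogeneousCurve m f)
    (ω₀ ω₁ : Form2 m)
    (h₀ : IsSymplecticGerm m ω₀) (h₁ : IsSymplecticGerm m ω₁)
    (hsame : SameAR2 m ω₀ ω₁ f) :
    ∃ Φ : (Fin m → ℝ) → (Fin m → ℝ), IsDiffeoGerm m Φ ∧
      (∀ᶠ t in 𝓝 (0 : ℝ), Φ (f t) = f t) ∧
      ∀ᶠ x in 𝓝 (0 : Fin m → ℝ), ∀ u v, pull2 m Φ ω₁ x u v = ω₀ x u v := by
  obtain ⟨hf0, hfs⟩ := hf
  have hfc : ContinuousAt f 0 := (smooth_ev f 0 hfs).self_of_nhds.continuousAt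
  obtain ⟨k, -, -, μ, -, hμ, hlin, φ, Ψ, ⟨hφ0, hφs, hφd⟩, ⟨hΨ0, hΨs, D, hD⟩, hΨf⟩ := hq
  have hΨf : ∀ᶠ t in 𝓝 (0 : ℝ), Ψ (f t) = mono m k μ (φ t) := hΨf
  have hΨs' := smooth_ev Ψ 0 hΨs
  have hφs' := smooth_ev φ 0 hφs
  have hΨc : ContinuousAt Ψ 0 := hΨs'.self_of_nhds.continuousAt
  have hφc : ContinuousAt φ 0 := hφs'.self_of_nhds.continuousAt
  have tΨ : Tendsto Ψ (𝓝 0) (𝓝 0) := by simpa [ContinuousAt, hΨ0] using hΨc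
  have tφ : Tendsto φ (𝓝 0) (𝓝 0) := by simpa [ContinuousAt, hφ0] using hφc
  have tf : Tendsto f (𝓝 0) (𝓝 0) := by simpa [ContinuousAt, hf0] using hfc
  have tg : Tendsto (mono m k μ) (𝓝 0) (𝓝 0) := by
    have := (mono_contDiff m k μ).continuous.tendsto 0
    rwa [mono_zero m k μ hμ] at this
  obtain ⟨S, hS0, hSs, hTS, hST⟩ := inv_germ Ψ 0 D hΨs' hD
  rw [hΨ0] at hS0 hSs hTS
  obtain ⟨Θ, hΘ, hΘS⟩ := globalize S 0 hSs
  have hΘ0 : Θ 0 = 0 := by rw [hΘS.self_of_nhds, hS0]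
  have tΘ : Tendsto Θ (𝓝 0) (𝓝 0) := by
    have := hΘ.continuous.tendsto 0
    rwa [hΘ0] at this
  have hΨΘ : ∀ᶠ y in 𝓝 (0 : Fin m → ℝ), Ψ (Θ y) = y := by
    filter_upwards [hΘS, hTS] with y h1 h2
    rw [h1, h2]
  have hΘΨ : ∀ᶠ x in 𝓝 (0 : Fin m → ℝ), Θ (Ψ x) = x := by
    filter_upwards [tΨ.eventually hΘS, hST] with y h1 h2
    rw [h1, h2]
  have hΘd : ∀ x, HasFDerivAt Θ (fderiv ℝ Θ x) x := fun x =>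
    (hΘ.differentiable (by simp) x).hasFDerivAt
  obtain ⟨S1, hS10, hS1s, hφS1, -⟩ := inv_germ φ 0
    (ContinuousLinearEquiv.unitsEquivAut ℝ (Units.mk0 (deriv φ 0) hφd)) hφs'
    ((hφs'.self_of_nhds.differentiableAt (by simp)).hasDerivAt.hasFDerivAt_equiv hφd)
  rw [hφ0] at hS10 hS1s hφS1
  have tS1 : Tendsto S1 (𝓝 0) (𝓝 0) := by
    have := hS1s.self_of_nhds.continuousAt
    simpa [ContinuousAt, hS10] using this
  have hΘg : ∀ᶠ t in 𝓝 (0 : ℝ), Θ (mono m k μ t) = f (S1 t) := by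
    filter_upwards [tS1.eventually hΨf, hφS1, (tf.comp tS1).eventually hΘΨ] with t h1 h2 h3
    rw [h2] at h1
    rw [← h1]
    exact h3
  have hfg : ∀ᶠ t in 𝓝 (0 : ℝ), Θ (mono m k μ (φ t)) = f t := by
    filter_upwards [hΨf, tf.eventually hΘΨ] with t h1 h2
    rw [← h1, h2]
  -- derivative relations at the origin
  have hD1 : ∀ u, D (fderiv ℝ Θ 0 u) = u := by
    have e : HasFDerivAt (fun y => Ψ (Θ y)) ((D : (Fin m → ℝ) →L[ℝ] (Fin m → ℝ)).comp (fderiv ℝ Θ 0)) 0 :=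
      HasFDerivAt.comp (g := Ψ) (0 : Fin m → ℝ) (by rw [hΘ0]; exact hD) (hΘd 0)
    have e2 : HasFDerivAt (fun y : Fin m → ℝ => Ψ (Θ y)) (ContinuousLinearMap.id ℝ _) 0 :=
      (hasFDerivAt_id (0 : Fin m → ℝ)).congr_of_eventuallyEq hΨΘ
    intro u
    have := congrArg (fun L : (Fin m → ℝ) →L[ℝ] (Fin m → ℝ) => L u) (e.unique e2)
    simpa using this
  have hD2 : ∀ u, fderiv ℝ Θ 0 (D u) = u := by
    intro u
    apply D.injective
    rw [hD1]
  obtain ⟨α, β, hα, hβ, hα0, hβ0, hrel⟩ := hsame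
  obtain ⟨hF0, hC0, hN0⟩ := h₀
  obtain ⟨hF1, hC1, hN1⟩ := h₁
  obtain ⟨w0, hw0, ew0⟩ := bundle2 ω₀ hF0
  obtain ⟨w1, hw1, ew1⟩ := bundle2 ω₁ hF1
  obtain ⟨a, ha, ea⟩ := bundle2 α hα
  obtain ⟨b, hb, eb⟩ := bundle1 β hβ
  have anti : ∀ (w : (Fin m → ℝ) → (Fin m → ℝ) →L[ℝ] (Fin m → ℝ) →L[ℝ] ℝ) (ω : Form2 m),
      IsForm2 m ω → (∀ᶠ x in 𝓝 0, ∀ u v, w x u v = ω x u v) →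
      ∀ᶠ x in 𝓝 0, ∀ u v, w x u v = - w x v u := by
    intro w ω hω e
    filter_upwards [e] with x hx u v
    rw [hx, hx, hω.2.1]
  have nd : ∀ (w : (Fin m → ℝ) → (Fin m → ℝ) →L[ℝ] (Fin m → ℝ) →L[ℝ] ℝ) (ω : Form2 m),
      (∀ᶠ x in 𝓝 (0 : Fin m → ℝ), ∀ u, (∀ v, ω x u v = 0) → u = 0) →
      (∀ᶠ x in 𝓝 0, ∀ u v, w x u v = ω x u v) →
      ∀ u, (∀ v, pb Θ w 0 u v = 0) → u = 0 := by
    intro w ω hω e u hu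
    have h1 := hω.self_of_nhds (fderiv ℝ Θ 0 u) (by
      intro v
      rw [← e.self_of_nhds]
      have := hu (D v)
      rw [pb_apply, hΘ0, hD2] at this
      exact this)
    rw [← hD1 u, h1, map_zero]
  obtain ⟨P, hPs, hPg, hPω⟩ := mono_case m k μ hμ hlin (pb Θ w0) (pb Θ w1) (pb Θ a) (pb1 Θ b)
    (pb_contDiff Θ w0 hΘ hw0) (pb_contDiff Θ w1 hΘ hw1) (pb_contDiff Θ a hΘ ha)
    (pb1_contDiff Θ b hΘ hb)
    (pb_antisymm Θ w0 hΘ.continuous.continuousAt hΘ0 (anti w0 ω₀ hF0 ew0))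
    (pb_antisymm Θ w1 hΘ.continuous.continuousAt hΘ0 (anti w1 ω₁ hF1 ew1))
    (pb_antisymm Θ a hΘ.continuous.continuousAt hΘ0 (anti a α hα ea))
    (pb_closed Θ w0 hΘ hw0 hΘ0 (anti w0 ω₀ hF0 ew0) (bridge_closed ω₀ w0 hw0 ew0 hC0))
    (pb_closed Θ w1 hΘ hw1 hΘ0 (anti w1 ω₁ hF1 ew1) (bridge_closed ω₁ w1 hw1 ew1 hC1))
    (nd w0 ω₀ hN0 ew0) (nd w1 ω₁ hN1 ew1)
    (by
      filter_upwards [hΘg, tS1.eventually hα0, (tf.comp tS1).eventually ea] with t h1 h2 h3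
      ext u v
      simp only [Function.comp] at h3
      rw [pb_apply, h1, h3, h2]
      rfl)
    (by
      filter_upwards [hΘg, tS1.eventually hβ0, (tf.comp tS1).eventually eb] with t h1 h2 h3
      ext u
      simp only [Function.comp] at h3
      rw [pb1_apply, h1, h3, h2]
      rfl)
    (by
      filter_upwards [tΘ.eventually hrel, tΘ.eventually ew0, tΘ.eventually ew1, tΘ.eventually ea,
        tΘ.eventually (bridge_d β b hb eb)] with x h1 h2 h3 h4 h5 u v
      rw [pb1_d Θ b hΘ hb, pb_apply, pb_apply, pb_apply, h2, h3, h4, ← h5]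
      exact h1 _ _)
  have hP0 : P 0 = 0 := by
    have := hPg.self_of_nhds
    rwa [mono_zero m k μ hμ] at this
  have tP : Tendsto P (𝓝 0) (𝓝 0) := by
    have := hPs.self_of_nhds.continuousAt
    simpa [ContinuousAt, hP0] using this
  have tall : Tendsto (fun x => Θ (P (Ψ x))) (𝓝 0) (𝓝 0) := tΘ.comp (tP.comp tΨ)
  have hs : ∀ᶠ x in 𝓝 (0 : Fin m → ℝ), ContDiffAt ℝ (⊤ : ℕ∞) (fun x => Θ (P (Ψ x))) x := by
    filter_upwards [hΨs', tΨ.eventually hPs] with x h1 h2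
    exact hΘ.contDiffAt.comp x (h2.comp x h1)
  have hpull : ∀ᶠ x in 𝓝 (0 : Fin m → ℝ), ∀ u v,
      pull2 m (fun x => Θ (P (Ψ x))) ω₁ x u v = ω₀ x u v := by
    filter_upwards [hΨs', tΨ.eventually hPs, tall.eventually ew1, tΨ.eventually hPω,
      hΘΨ.eventually_nhds, ew0] with x h1 h2 h3 h4 h5 h6 u v
    have d1 := (h1.differentiableAt (by simp)).hasFDerivAt
    have d2 := (h2.differentiableAt (by simp)).hasFDerivAt
    have d := (hΘd (P (Ψ x))).comp x (d2.comp x d1)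
    have e := (hΘd (Ψ x)).comp x d1
    have e2 : HasFDerivAt (Θ ∘ Ψ) (ContinuousLinearMap.id ℝ _) x :=
      (hasFDerivAt_id x).congr_of_eventuallyEq h5
    have e3 : ∀ u, fderiv ℝ Θ (Ψ x) (fderiv ℝ Ψ x u) = u := fun u =>
      congrArg (fun L : (Fin m → ℝ) →L[ℝ] (Fin m → ℝ) => L u) (e.unique e2)
    have d' : fderiv ℝ (fun x => Θ (P (Ψ x))) x = _ := d.fderiv
    have h4' := h4 (fderiv ℝ Ψ x u) (fderiv ℝ Ψ x v)
    rw [pb_apply, pb_apply, e3, e3, h5.self_of_nhds, h6] at h4'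
    rw [← h4', pull2, ← h3, d']
    rfl
  refine ⟨fun x => Θ (P (Ψ x)), ⟨by simp [hΨ0, hP0, hΘ0], ⟨_, hs, fun x hx =>
    ContDiffAt.contDiffWithinAt hx⟩, ?_⟩, ?_, hpull⟩
  · have hd := (hs.self_of_nhds.differentiableAt (by simp)).hasFDerivAt
    have hinj : Function.Injective
        ((fderiv ℝ (fun x => Θ (P (Ψ x))) 0 : (Fin m → ℝ) →L[ℝ] (Fin m → ℝ)) :
          (Fin m → ℝ) →ₗ[ℝ] (Fin m → ℝ)) := by
      rw [injective_iff_map_eq_zero]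
      intro u hu
      have hu : fderiv ℝ (fun x => Θ (P (Ψ x))) 0 u = 0 := hu
      apply hN0.self_of_nhds
      intro v
      rw [← hpull.self_of_nhds, pull2, hu, ← tall.eventually ew1 |>.self_of_nhds]
      simp
    refine ⟨(LinearEquiv.ofInjectiveEndo _ hinj).toContinuousLinearEquiv, ?_⟩
    exact hd.congr_fderiv (ContinuousLinearMap.ext fun u => rfl)
  · filter_upwards [hΨf, hfg, tφ.eventually hPg] with t h1 h2 h3
    rw [h1, h3, h2]

/-- Theorem A of Domitrz–Janeczko–Zhitomirskii for quasi-homogeneous curves: two germs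
of symplectic forms with the same algebraic restriction to a quasi-homogeneous
curve-germ `f` are interchanged by a germ of diffeomorphism preserving `f`. -/
theorem darboux_givental_quasiHomogeneous
    (n : ℕ) (f : ℝ → (Fin (2*n) → ℝ)) (hf : IsCurveGerm (2*n) f)
    (hq : IsQuasiHomogeneousCurve (2*n) f)
    (ω₀ ω₁ : Form2 (2*n))
    (h₀ : IsSymplecticGerm (2*n) ω₀) (h₁ : IsSymplecticGerm (2*n) ω₁)
    (hsame : SameAR2 (2*n) ω₀ ω₁ f) :
    ∃ Φ : (Fin (2*n) → ℝ) → (Fin (2*n) → ℝ), IsDiffeoGerm (2*n) Φ ∧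
      (∀ᶠ t in 𝓝 (0 : ℝ), Φ (f t) = f t) ∧
      ∀ᶠ x in 𝓝 (0 : Fin (2*n) → ℝ), ∀ u v, pull2 (2*n) Φ ω₁ x u v = ω₀ x u v := by
  exact darboux_givental_aux (2*n) f hf hq ω₀ ω₁ h₀ h₁ hsame
end
end

section
/- Let ω0 be the standard symplectic form on ℝ^4 with coordinates ordered (p1,q1,p2,q2), and let c_1, c_2 be real numbers with c_2≠0. Then the curve-germ f(t) = (t^4, t^5+c_1·t^7, t^6, c_2·t^7) has Lagrangian tangency order Lt(f) = 5; that is: (a) for every Lagrangian defining map H = (H_1,H_2):(ℝ^4,0)→(ℝ^2,0), min(ord(H_1∘f), ord(H_2∘f)) ≤ 5, and (b) there exists a Lagrangian defining map H = (H_1,H_2):(ℝ^4,0)→(ℝ^2,0) with min(ord(H_1∘f), ord(H_2∘f)) = 5. -/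
open Filter Topology

noncomputable section

/-- The standard symplectic form on `ℝ^{2n}`, coordinates ordered `(p₁,q₁,…,pₙ,qₙ)`. -/
def omega0 (n : ℕ) (u v : Fin (2*n) → ℝ) : ℝ :=
  ∑ i : Fin n,
    (u ⟨2*i.val, by have := i.isLt; omega⟩ * v ⟨2*i.val+1, by have := i.isLt; omega⟩
      - u ⟨2*i.val+1, by have := i.isLt; omega⟩ * v ⟨2*i.val, by have := i.isLt; omega⟩)

/-- A Lagrangian defining map: a smooth map-germ `H : (ℝ^{2n},0) → (ℝ^n,0)` whose
derivative at `0` has rank `n` and such that, near `0`, the kernel of `DH(x)` is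
`ω₀`-isotropic at every point `x` of `H⁻¹(0)`. -/
def IsLagrangianMap (n : ℕ) (H : (Fin (2*n) → ℝ) → (Fin n → ℝ)) : Prop :=
  H 0 = 0 ∧ (∃ U ∈ 𝓝 (0 : Fin (2*n) → ℝ), ContDiffOn ℝ (⊤ : ℕ∞) H U) ∧
  Function.Surjective ⇑(fderiv ℝ H 0) ∧
  ∀ᶠ x in 𝓝 (0 : Fin (2*n) → ℝ), H x = 0 → ∀ u v : Fin (2*n) → ℝ,
    fderiv ℝ H x u = 0 → fderiv ℝ H x v = 0 → omega0 n u v = 0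

open Asymptotics

lemma aux_taylor (n : ℕ) (g : ℝ → ℝ) (hg : ContDiffAt ℝ n g 0) :
    (fun t => g t - ∑ k ∈ Finset.range (n + 1), ((k.factorial : ℝ)⁻¹ * t ^ k) * iteratedDeriv k g 0)
      =o[𝓝 0] fun t => t ^ n := by
  obtain ⟨u, hu, hc⟩ := hg.contDiffOn le_rfl (by simp)
  obtain ⟨ε, hε, hb⟩ := Metric.mem_nhds_iff.1 hu
  have h0 : (0:ℝ) ∈ Metric.ball (0:ℝ) ε := Metric.mem_ball_self hε
  have h := taylor_isLittleO (convex_ball (0:ℝ) ε) h0 (hc.mono hb)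
  rw [Metric.isOpen_ball.nhdsWithin_eq h0] at h
  simp only [taylor_within_apply, sub_zero, smul_eq_mul] at h
  refine h.congr_left fun t => ?_
  congr 1
  refine Finset.sum_congr rfl fun k _ => ?_
  rw [iteratedDerivWithin_of_isOpen Metric.isOpen_ball h0]

lemma aux_pow (m n : ℕ) (h : n ≤ m) : (fun t : ℝ => t ^ m) =O[𝓝 0] fun t => t ^ n := by
  obtain ⟨k, rfl⟩ := Nat.exists_eq_add_of_le h
  have : (fun t : ℝ => t ^ k) =O[𝓝 0] fun _ => (1:ℝ) :=
    (by fun_prop : ContinuousAt (fun t : ℝ => t ^ k) 0).isBigO_one ℝ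
  simpa [pow_add] using (isBigO_refl (fun t : ℝ => t ^ n) (𝓝 0)).mul this

lemma aux_pow_o (m n : ℕ) (h : n < m) : (fun t : ℝ => t ^ m) =o[𝓝 0] fun t => t ^ n :=
  isLittleO_pow_pow h

lemma aux_coef (a : ℝ) (n : ℕ) (h : (fun t : ℝ => a * t ^ n) =o[𝓝 0] fun t => t ^ n) : a = 0 := by
  by_contra ha
  rw [isLittleO_const_mul_left_iff ha] at h
  have h2 : ∀ᶠ t : ℝ in 𝓝 0, t ^ n = 0 := by
    have := h.def (c := 1/2) (by norm_num)
    filter_upwards [this] with t ht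
    have := norm_nonneg (t ^ n)
    exact norm_eq_zero.1 (by linarith)
  have h3 : ∃ᶠ t : ℝ in 𝓝 0, t ≠ 0 := by
    have : ∃ᶠ t : ℝ in 𝓝[≠] 0, t ≠ 0 := Eventually.frequently self_mem_nhdsWithin
    exact this.filter_mono nhdsWithin_le_nhds
  obtain ⟨t, h4, h5⟩ := (h3.and_eventually h2).exists
  exact pow_ne_zero n h4 h5

lemma aux_main (c₁ c₂ : ℝ) (G : (Fin (2*2) → ℝ) → ℝ) (hG : ContDiffAt ℝ (⊤ : ℕ∞) G 0)
    (h : ∀ m ≤ 5, iteratedDeriv m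
      (fun t : ℝ => G (![t^4, t^5 + c₁ * t^7, t^6, c₂ * t^7])) 0 = 0) :
    fderiv ℝ G 0 ![1,0,0,0] = 0 ∧ fderiv ℝ G 0 ![0,1,0,0] = 0 := by
  have hG0 : G 0 = 0 := by
    have := h 0 (by norm_num)
    simp only [iteratedDeriv_zero] at this
    rw [← this]; congr 1; ext i; fin_cases i <;> simp
  set f : ℝ → (Fin (2*2) → ℝ) := fun t => ![t^4, t^5 + c₁ * t^7, t^6, c₂ * t^7] with hf
  set e : ℝ → (Fin (2*2) → ℝ) := fun s => ![s, 0, 0, 0] with he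
  have hf0 : f 0 = 0 := by ext i; fin_cases i <;> simp [f]
  have he0 : e 0 = 0 := by ext i; fin_cases i <;> simp [e]
  have hfc : ContDiff ℝ (⊤ : ℕ∞) f := by
    rw [contDiff_pi]; intro i; fin_cases i <;> simp [f] <;> fun_prop
  have hec : ContDiff ℝ (⊤ : ℕ∞) e := by
    rw [contDiff_pi]; intro i; fin_cases i <;> simp [e] <;> fun_prop
  set L := fderiv ℝ G 0 with hL
  set a := L ![1,0,0,0] with ha
  set b := L ![0,1,0,0] with hb
  set c := L ![0,0,1,0] with hc
  set d := L ![0,0,0,1] with hd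
  have hst : HasStrictFDerivAt G L 0 := hG.hasStrictFDerivAt (by simp)
  have hgo : (fun t => G (f t)) =o[𝓝 0] fun t => t ^ 5 := by
    have hgc : ContDiffAt ℝ (5:ℕ) (fun t => G (f t)) 0 := by
      have : ContDiffAt ℝ (⊤ : ℕ∞) (fun t => G (f t)) 0 :=
        ContDiffAt.comp (g := G) 0 (by rw [hf0]; exact hG) hfc.contDiffAt
      exact this.of_le (WithTop.coe_le_coe.2 le_top)
    refine (aux_taylor 5 _ hgc).congr_left fun t => ?_
    rw [Finset.sum_eq_zero, sub_zero]
    intro k hk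
    rw [h k (by simp at hk; omega), mul_zero]
  have hLf : ∀ t, L (f t - e (t^4)) = b * t^5 + (c * t^6 + (c₁ * b + c₂ * d) * t^7) := by
    intro t
    have : f t - e (t^4) = (t^5 + c₁ * t^7) • (![0,1,0,0] : Fin (2*2) → ℝ)
        + t^6 • (![0,0,1,0] : Fin (2*2) → ℝ) + (c₂ * t^7) • (![0,0,0,1] : Fin (2*2) → ℝ) := by
      ext i; fin_cases i <;> simp [f, e]
    rw [this]; simp only [map_add, map_smul, smul_eq_mul, ← hb, ← hc, ← hd]; ring
  have hLe : ∀ s, L (e s) = a * s := by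
    intro s
    have : e s = s • (![1,0,0,0] : Fin (2*2) → ℝ) := by
      ext i; fin_cases i <;> simp [e]
    rw [this]; simp only [map_smul, smul_eq_mul, ← ha]; ring
  have hsub : (fun t => f t - e (t^4)) =O[𝓝 0] fun t => t ^ 5 := by
    rw [isBigO_pi]
    intro i
    have h1 := aux_pow 5 5 le_rfl
    have h2 := aux_pow 6 5 (by norm_num)
    have h3 := aux_pow 7 5 (by norm_num)
    have h4 := isBigO_zero (E' := ℝ) (fun t : ℝ => t ^ 5) (𝓝 0)
    fin_cases i
    · simpa [f, e] using h4
    · simpa [f, e] using h1.add (h3.const_mul_left c₁)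
    · simpa [f, e] using h2
    · simpa [f, e] using h3.const_mul_left c₂
  have ht : Tendsto (fun t : ℝ => (f t, e (t^4))) (𝓝 0) (𝓝 (0, 0)) := by
    have : ContinuousAt (fun t : ℝ => (f t, e (t^4))) 0 :=
      (hfc.continuous.prodMk (hec.continuous.comp (by fun_prop))).continuousAt
    have h2 := this.tendsto
    simpa [hf0, he0] using h2
  have hstr : (fun t => G (f t) - G (e (t^4)) - L (f t - e (t^4))) =o[𝓝 0] fun t => t ^ 5 :=
    (hst.isLittleO.comp_tendsto ht).trans_isBigO hsub
  set h1 : ℝ → ℝ := fun s => G (e s) with hh1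
  have hh1c : ContDiffAt ℝ (2:ℕ) h1 0 := by
    have : ContDiffAt ℝ (⊤ : ℕ∞) h1 0 :=
      ContDiffAt.comp (g := G) 0 (by rw [he0]; exact hG) hec.contDiffAt
    exact this.of_le (WithTop.coe_le_coe.2 le_top)
  have hd1 : HasDerivAt h1 a 0 := by
    have hed : HasDerivAt e ![1,0,0,0] 0 := by
      rw [hasDerivAt_pi]
      intro i
      fin_cases i
      · exact hasDerivAt_id (0:ℝ)
      all_goals exact hasDerivAt_const (0:ℝ) (0:ℝ)
    have hGd : HasFDerivAt G L (e 0) := by rw [he0]; exact hst.hasFDerivAt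
    exact hGd.comp_hasDerivAt 0 hed
  set q := iteratedDeriv 2 h1 0 / 2 with hq
  have htay : (fun s => h1 s - (a * s + q * s^2)) =o[𝓝 0] fun s => s ^ 2 := by
    refine (aux_taylor 2 _ hh1c).congr_left fun t => ?_
    simp only [Finset.sum_range_succ, Finset.sum_range_zero, iteratedDeriv_zero,
      iteratedDeriv_one, hd1.deriv]
    have : h1 0 = 0 := by simp only [hh1, he0, hG0]
    rw [this]; simp [Nat.factorial, hq]; ring
  have ht4 : Tendsto (fun t : ℝ => t^4) (𝓝 0) (𝓝 0) := by
    have : ContinuousAt (fun t : ℝ => t^4) 0 := by fun_prop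
    simpa using this.tendsto
  have htay2 : (fun t : ℝ => h1 (t^4) - (a * t^4 + q * (t^4)^2)) =o[𝓝 0] fun t => t ^ 5 := by
    refine (htay.comp_tendsto ht4).trans_isBigO ?_
    have := aux_pow 8 5 (by norm_num)
    refine this.congr_left fun t => ?_
    simp only [Function.comp]; ring
  -- the polynomial part is negligible
  have hpoly : (fun t : ℝ => a * t^4 + b * t^5) =o[𝓝 0] fun t => t ^ 5 := by
    have h6 := (aux_pow_o 6 5 (by norm_num)).const_mul_left c
    have h7 := (aux_pow_o 7 5 (by norm_num)).const_mul_left (c₁ * b + c₂ * d)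
    have h8 := (aux_pow_o 8 5 (by norm_num)).const_mul_left q
    refine (((((hgo.sub hstr).sub htay2).sub h6).sub h7).sub h8).congr_left fun t => ?_
    simp only [hLf, hh1]; ring
  have ha0 : a = 0 := by
    refine aux_coef a 4 ?_
    have h5 := (aux_pow_o 5 4 (by norm_num))
    refine ((hpoly.trans h5).sub (h5.const_mul_left b)).congr_left fun t => ?_
    ring
  refine ⟨ha0, aux_coef b 5 ?_⟩
  simpa [ha0] using hpoly

/-- The curve `f(t) = (t⁴, t⁵+c₁t⁷, t⁶, c₂t⁷)` (`c₂ ≠ 0`) has Lagrangian tangency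
order `5`: (a) for every Lagrangian defining map `H` some component of `H ∘ f`
vanishes at `0` to order at most `5`, and (b) there is a Lagrangian defining map all
of whose components composed with `f` vanish to order at least `5`, one of them to
order exactly `5`. -/
theorem lagrangian_tangency_order_row1_4567 (c₁ c₂ : ℝ) (hc₂ : c₂ ≠ 0) :
    (∀ H : (Fin (2*2) → ℝ) → (Fin 2 → ℝ), IsLagrangianMap 2 H →
      ∃ i : Fin 2, ∃ m ≤ 5,
        iteratedDeriv m (fun t : ℝ => H (![t^4, t^5 + c₁ * t^7, t^6, c₂ * t^7]) i) 0 ≠ 0) ∧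
    (∃ H : (Fin (2*2) → ℝ) → (Fin 2 → ℝ), IsLagrangianMap 2 H ∧
      (∀ i : Fin 2, ∀ m < 5,
        iteratedDeriv m (fun t : ℝ => H (![t^4, t^5 + c₁ * t^7, t^6, c₂ * t^7]) i) 0 = 0) ∧
      ∃ i : Fin 2,
        iteratedDeriv 5 (fun t : ℝ => H (![t^4, t^5 + c₁ * t^7, t^6, c₂ * t^7]) i) 0 ≠ 0) := by
  constructor
  · rintro H ⟨-, ⟨U, hU, hHU⟩, -, hiso⟩
    by_contra hcon
    push Not at hcon
    have hH : ContDiffAt ℝ (⊤ : ℕ∞) H 0 := hHU.contDiffAt hU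
    have hdiff : DifferentiableAt ℝ H 0 := hH.differentiableAt (by simp)
    have key := fun i => aux_main c₁ c₂ (fun x => H x i) (contDiffAt_pi.1 hH i) (hcon i)
    have hfd : ∀ (i : Fin 2) (u : Fin (2*2) → ℝ),
        fderiv ℝ (fun x => H x i) 0 u = fderiv ℝ H 0 u i := by
      intro i u
      rw [((hasFDerivAt_pi'.1 hdiff.hasFDerivAt) i).fderiv]; rfl
    have hH0 : H 0 = 0 := by
      ext i
      have := hcon i 0 (by norm_num)
      simp only [iteratedDeriv_zero] at this
      rw [Pi.zero_apply, ← this]; congr 1; congr 1; ext j; fin_cases j <;> simp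
    have := hiso.self_of_nhds hH0 ![1,0,0,0] ![0,1,0,0]
      (by ext i; rw [← hfd]; exact (key i).1) (by ext i; rw [← hfd]; exact (key i).2)
    simp [omega0, Fin.sum_univ_two] at this
  · let A : (Fin (2*2) → ℝ) →L[ℝ] (Fin 2 → ℝ) :=
      ContinuousLinearMap.pi ![ContinuousLinearMap.proj 1, ContinuousLinearMap.proj 2]
    have hA : ∀ x, A x = ![x 1, x 2] := by
      intro x; ext i; fin_cases i <;> rfl
    have hfd : ∀ x, fderiv ℝ (⇑A) x = A := fun x => A.fderiv
    have e0 : ∀ t : ℝ, A ![t^4, t^5 + c₁ * t^7, t^6, c₂ * t^7] 0 = t^5 + c₁ * t^7 := by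
      intro t; rw [hA]; rfl
    have e1 : ∀ t : ℝ, A ![t^4, t^5 + c₁ * t^7, t^6, c₂ * t^7] 1 = t^6 := by
      intro t; rw [hA]; rfl
    have d0 : ∀ m, iteratedDeriv m (fun t : ℝ => t^5 + c₁ * t^7) 0 =
        iteratedDeriv m (fun t : ℝ => t^5) 0 + c₁ * iteratedDeriv m (fun t : ℝ => t^7) 0 := by
      intro m
      rw [iteratedDeriv_fun_add (by fun_prop) (by fun_prop), iteratedDeriv_const_mul_field]
    refine ⟨A, ⟨map_zero A, ⟨Set.univ, univ_mem, A.contDiff.contDiffOn⟩, ?_, ?_⟩, ?_, 0, ?_⟩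
    · rw [hfd]
      intro y
      refine ⟨![0, y 0, y 1, 0], ?_⟩
      rw [hA]; ext i; fin_cases i <;> rfl
    · refine Eventually.of_forall fun x _ u v hu hv => ?_
      rw [hfd, hA] at hu hv
      have u1 : u 1 = 0 := congrFun hu 0
      have u2 : u 2 = 0 := congrFun hu 1
      have v1 : v 1 = 0 := congrFun hv 0
      have v2 : v 2 = 0 := congrFun hv 1
      have : omega0 2 u v = u 0 * v 1 - u 1 * v 0 + (u 2 * v 3 - u 3 * v 2) := by
        simp only [omega0, Fin.sum_univ_two]; rfl
      rw [this, u1, u2, v1, v2]; ring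
    · intro i m hm
      fin_cases i
      · simp only [Fin.zero_eta, e0, d0]
        interval_cases m <;> simp [iteratedDeriv_eq_iterate]
      · simp only [Fin.mk_one, e1]
        interval_cases m <;> simp [iteratedDeriv_eq_iterate]
    · simp only [e0, d0]
      simp [iteratedDeriv_eq_iterate, Nat.descFactorial]
end
end

section
/- Let n ≥ 4 and let ω0 be the standard symplectic form on ℝ^{2n} with coordinates ordered (p1,q1,…,pn,qn). Then the curve-germ f(t) = (t^4, t^{11}, t^5, 0, t^6, 0, t^7, 0, …, 0) has Lagrangian tangency order Lt(f) = 11; that is: (a) for every Lagrangian defining map H = (H_1,…,H_n):(ℝ^{2n},0)→(ℝ^n,0), min_{1≤i≤n} ord(H_i∘f) ≤ 11, and (b) there exists a Lagrangian defining map H with min_{1≤i≤n} ord(H_i∘f) = 11. -/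
open Filter Topology

noncomputable section

/-- Pad a vector in `ℝ^k` with trailing zeros to a vector in `ℝ^m`. -/
def padTo (m k : ℕ) (w : Fin k → ℝ) : Fin m → ℝ :=
  fun i => if h : (i : ℕ) < k then w ⟨i, h⟩ else 0

/-- Row 17 of Table 2: the curve `f(t) = (t⁴, t¹¹, t⁵, 0, t⁶, 0, t⁷, 0, …, 0)` in
`ℝ^{2n}`, `n ≥ 4`. -/
def f17 (n : ℕ) : ℝ → (Fin (2*n) → ℝ) :=
  fun t => padTo (2*n) 8 ![t^4, t^11, t^5, 0, t^6, 0, t^7, 0]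


lemma aux_bound {E F : Type*} [NormedAddCommGroup E] [NormedSpace ℝ E] [NormedAddCommGroup F]
    [NormedSpace ℝ F] (g : E → F) (k : ℕ) (h0 : g 0 = 0)
    (hd : ∀ᶠ x in 𝓝 (0 : E), DifferentiableAt ℝ g x)
    (hb : (fun x => fderiv ℝ g x) =O[𝓝 0] fun x => ‖x‖ ^ k) :
    g =O[𝓝 0] fun x => ‖x‖ ^ (k+1) := by
  obtain ⟨C, hC0, hC⟩ := hb.exists_nonneg
  rw [Asymptotics.isBigOWith_iff] at hC
  obtain ⟨r, hr, hball⟩ := Metric.eventually_nhds_iff_ball.1 (hd.and hC)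
  refine Asymptotics.IsBigO.of_bound C ?_
  filter_upwards [Metric.ball_mem_nhds (0 : E) hr] with x hx
  have key := (convex_closedBall (0 : E) ‖x‖).norm_image_sub_le_of_norm_fderiv_le (𝕜 := ℝ)
    (f := g) (C := C * ‖x‖ ^ k) (x := 0) (y := x) ?_ ?_ (by simp) (by simp)
  · simp only [h0, sub_zero] at key
    rw [norm_pow, norm_norm, pow_succ, ← mul_assoc]
    exact key
  · intro y hy
    refine (hball y ?_).1
    simp at hy hx ⊢
    linarith
  · intro y hy
    have hy' : ‖y‖ ≤ ‖x‖ := by simpa using hy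
    have := (hball y (by simp at hx ⊢; linarith)).2
    rw [norm_pow, norm_norm] at this
    refine this.trans ?_
    gcongr

lemma aux_taylor_s19 {E F : Type*} [NormedAddCommGroup E] [NormedSpace ℝ E] [NormedAddCommGroup F]
    [NormedSpace ℝ F] (H : E → F) (h0 : H 0 = 0) (hH : ContDiffAt ℝ 3 H 0) :
    (fun x => H x - fderiv ℝ H 0 x - (1/2 : ℝ) • fderiv ℝ (fderiv ℝ H) 0 x x)
      =O[𝓝 0] fun x => ‖x‖ ^ 3 := by
  have hs : IsSymmSndFDerivAt ℝ H 0 := hH.isSymmSndFDerivAt (by simp; norm_num)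
  have h1 : ContDiffAt ℝ 2 (fderiv ℝ H) 0 := hH.fderiv_right (by norm_num)
  have h2 : ContDiffAt ℝ 1 (fderiv ℝ (fderiv ℝ H)) 0 := h1.fderiv_right (by norm_num)
  have e0 : ∀ᶠ x in 𝓝 (0 : E), DifferentiableAt ℝ H x :=
    (hH.eventually (by simp)).mono fun x hx => hx.differentiableAt (by simp)
  have e1 : ∀ᶠ x in 𝓝 (0 : E), DifferentiableAt ℝ (fderiv ℝ H) x :=
    (h1.eventually (by simp)).mono fun x hx => hx.differentiableAt (by simp)
  set A := fderiv ℝ H 0 with hA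
  set B := fderiv ℝ (fderiv ℝ H) 0 with hB
  have hBs : ∀ u v, B u v = B v u := fun u v => hs u v
  have k2 : (fun x => fderiv ℝ H x - A - B x) =O[𝓝 0] fun x => ‖x‖ ^ 2 := by
    refine aux_bound _ 1 (by simp [hA]) ?_ ?_
    · filter_upwards [e1] with x hx
      exact (hx.sub (differentiableAt_const _)).sub B.differentiableAt
    · have : (fun x => fderiv ℝ (fderiv ℝ H) x - B) =O[𝓝 0] fun x : E => x - 0 :=
        (h2.differentiableAt (by simp)).isBigO_sub
      refine (this.trans ?_).congr' ?_ EventuallyEq.rfl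
      · simp; exact (Asymptotics.isBigO_refl _ _).norm_right
      · filter_upwards [e1] with x hx
        exact (((hx.hasFDerivAt.sub_const A).sub B.hasFDerivAt).fderiv).symm
  have hq : ∀ x, HasFDerivAt (fun x => (1/2 : ℝ) • B x x) (B x) x := by
    intro x
    have := (B.hasFDerivAt (x := x)).clm_apply (hasFDerivAt_id (𝕜 := ℝ) x)
    refine (this.const_smul (1/2 : ℝ)).congr_fderiv ?_
    ext v
    simp [hBs v x]
    rw [← two_smul ℝ, smul_smul]; norm_num
  refine aux_bound _ 2 (by simp [h0]) ?_ ?_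
  · filter_upwards [e0] with x hx
    exact (hx.sub A.differentiableAt).sub (hq x).differentiableAt
  · refine k2.congr' ?_ EventuallyEq.rfl
    filter_upwards [e0] with x hx
    exact (((hx.hasFDerivAt.sub A.hasFDerivAt).sub (hq x)).fderiv).symm

lemma aux_Q {E F : Type*} [NormedAddCommGroup E] [NormedSpace ℝ E] [NormedAddCommGroup F]
    [NormedSpace ℝ F] [CompleteSpace E] (H : E → F) (h0 : H 0 = 0) (hH : ContDiffAt ℝ 3 H 0)
    (R : F →L[ℝ] E) (hR : ∀ y, fderiv ℝ H 0 (R y) = y) (ω : E →L[ℝ] E →L[ℝ] ℝ)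
    (hL : ∀ᶠ x in 𝓝 (0 : E), H x = 0 → ∀ u v : E,
      fderiv ℝ H x u = 0 → fderiv ℝ H x v = 0 → ω u v = 0) :
    ∃ Q : E →L[ℝ] E →L[ℝ] E,
      (∀ w u, fderiv ℝ H 0 (Q w u) = - fderiv ℝ (fderiv ℝ H) 0 w u) ∧
      ∀ u v w, fderiv ℝ H 0 u = 0 → fderiv ℝ H 0 v = 0 → fderiv ℝ H 0 w = 0 →
        ω (Q w u) v + ω u (Q w v) = 0 := by
  set A := fderiv ℝ H 0 with hA
  let Φ : E → E := fun x => x + R (H x - A x)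
  have hΦ0 : Φ 0 = 0 := by simp [Φ, h0]
  have hAΦ : ∀ x, A (Φ x) = H x := by intro x; simp [Φ, hR]
  have hΦ : ContDiffAt ℝ 3 Φ 0 :=
    contDiffAt_id.add (R.contDiff.contDiffAt.comp _ (hH.sub A.contDiff.contDiffAt))
  have hΦ' : HasFDerivAt Φ ((ContinuousLinearEquiv.refl ℝ E : E ≃L[ℝ] E) : E →L[ℝ] E) 0 := by
    have hd : HasFDerivAt H A 0 := (hH.differentiableAt (by simp)).hasFDerivAt
    have := (hasFDerivAt_id (𝕜 := ℝ) (0 : E)).add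
      (R.hasFDerivAt.comp (0 : E) (hd.sub A.hasFDerivAt))
    refine this.congr_fderiv ?_
    ext v; simp
  let G : E → E := hΦ.localInverse hΦ' (by simp)
  have hG0 : G 0 = 0 := by
    have := hΦ.localInverse_apply_image hΦ' (by simp)
    rwa [hΦ0] at this
  have hG : ContDiffAt ℝ 3 G 0 := by
    have := hΦ.to_localInverse hΦ' (by simp)
    rwa [hΦ0] at this
  have hS := hΦ.hasStrictFDerivAt' hΦ' (by simp)
  have hright : ∀ᶠ y in 𝓝 (0 : E), Φ (G y) = y := by
    have := hS.eventually_right_inverse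
    rwa [hΦ0] at this
  have hHG : ∀ᶠ y in 𝓝 (0 : E), H (G y) = A y := by
    filter_upwards [hright] with y hy
    rw [← hAΦ, hy]
  have hGd0 : HasFDerivAt G (ContinuousLinearMap.id ℝ E) 0 := by
    have := hS.to_localInverse.hasFDerivAt
    rw [hΦ0] at this
    exact this
  have eH : ∀ᶠ x in 𝓝 (0 : E), DifferentiableAt ℝ H x :=
    (hH.eventually (by simp)).mono fun x hx => hx.differentiableAt (by simp)
  have eG : ∀ᶠ x in 𝓝 (0 : E), DifferentiableAt ℝ G x :=
    (hG.eventually (by simp)).mono fun x hx => hx.differentiableAt (by simp)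
  have hGc : Tendsto G (𝓝 0) (𝓝 0) := by
    have := hG.continuousAt.tendsto
    rwa [hG0] at this
  have hcomp : ∀ᶠ y in 𝓝 (0 : E), (fderiv ℝ H (G y)).comp (fderiv ℝ G y) = A := by
    filter_upwards [hHG.eventually_nhds, eG, hGc.eventually eH] with y h1 h2 h3
    have c := (h3.hasFDerivAt.comp y h2.hasFDerivAt).congr_of_eventuallyEq (EventuallyEq.symm h1)
    exact c.unique A.hasFDerivAt
  have dH1 : DifferentiableAt ℝ (fderiv ℝ H) 0 :=
    (hH.fderiv_right (m := 2) (by norm_num)).differentiableAt (by simp)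
  have dG1 : DifferentiableAt ℝ (fderiv ℝ G) 0 :=
    (hG.fderiv_right (m := 2) (by norm_num)).differentiableAt (by simp)
  have hG1 : fderiv ℝ G 0 = ContinuousLinearMap.id ℝ E := hGd0.fderiv
  refine ⟨fderiv ℝ (fderiv ℝ G) 0, ?_, ?_⟩
  · intro w u
    have c1 : HasFDerivAt (fun y => fderiv ℝ H (G y)) ((fderiv ℝ (fderiv ℝ H) 0)) 0 := by
      have : HasFDerivAt (fderiv ℝ H) (fderiv ℝ (fderiv ℝ H) 0) (G 0) := by
        rw [hG0]; exact dH1.hasFDerivAt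
      exact this.comp (0 : E) hGd0
    have c2 := c1.clm_comp dG1.hasFDerivAt
    have c3 := (c2.congr_of_eventuallyEq (EventuallyEq.symm hcomp)).unique
      (hasFDerivAt_const A (0 : E))
    have c4 := congrArg (fun T : E →L[ℝ] E →L[ℝ] F => T w u) c3
    simp [hG0, hG1, ← hA] at c4
    exact eq_neg_of_add_eq_zero_left c4
  · intro u v w hu hv hw
    have line : Tendsto (fun s : ℝ => s • w) (𝓝 0) (𝓝 0) := by
      have : Continuous (fun s : ℝ => s • w) := by fun_prop
      simpa using this.tendsto 0
    have hz : ∀ᶠ s in 𝓝 (0 : ℝ), ω (fderiv ℝ G (s • w) u) (fderiv ℝ G (s • w) v) = 0 := by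
      filter_upwards [line.eventually (hGc.eventually hL), line.eventually hHG,
        line.eventually hcomp] with s h1 h2 h3
      refine h1 (by rw [h2]; simp [hw]) _ _ ?_ ?_
      · rw [← ContinuousLinearMap.comp_apply, h3, hu]
      · rw [← ContinuousLinearMap.comp_apply, h3, hv]
    have dl : HasDerivAt (fun s : ℝ => s • w) w 0 := by
      simpa using (hasDerivAt_id (0 : ℝ)).smul_const w
    have dG2 : HasDerivAt (fun s : ℝ => fderiv ℝ G (s • w)) (fderiv ℝ (fderiv ℝ G) 0 w) 0 := by
      have : HasFDerivAt (fderiv ℝ G) (fderiv ℝ (fderiv ℝ G) 0) ((0 : ℝ) • w) := by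
        rw [zero_smul]; exact dG1.hasFDerivAt
      exact this.comp_hasDerivAt (0 : ℝ) dl
    have du := dG2.clm_apply (hasDerivAt_const (0 : ℝ) u)
    have dv := dG2.clm_apply (hasDerivAt_const (0 : ℝ) v)
    have dw := (ω.hasFDerivAt.comp_hasDerivAt (0 : ℝ) du).clm_apply dv
    have := (dw.congr_of_eventuallyEq (EventuallyEq.symm hz)).unique (hasDerivAt_const (0 : ℝ) (0 : ℝ))
    simpa [hG1] using this

lemma aux_poly (N : ℕ) (p : Polynomial ℝ)
    (h : (fun t : ℝ => p.eval t) =o[𝓝 0] fun t => t ^ N) : Polynomial.X ^ (N+1) ∣ p := by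
  have base : ∀ q : Polynomial ℝ, Tendsto (fun t : ℝ => q.eval t) (𝓝[≠] 0) (𝓝 0) →
      Polynomial.X ∣ q := by
    intro q hq
    have h2 : Tendsto (fun t : ℝ => q.eval t) (𝓝[≠] 0) (𝓝 (q.eval 0)) :=
      (q.continuous.tendsto 0).mono_left nhdsWithin_le_nhds
    have := tendsto_nhds_unique hq h2
    rw [Polynomial.X_dvd_iff, Polynomial.coeff_zero_eq_eval_zero, ← this]
  induction N with
  | zero =>
    simp at h
    simpa using base p (h.mono_left nhdsWithin_le_nhds)
  | succ N ih =>
    obtain ⟨q, rfl⟩ := ih (h.trans_isBigO (by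
      simp_rw [pow_succ _ N]
      simpa using (Asymptotics.isBigO_refl (fun t : ℝ => t ^ N) (𝓝 0)).mul
        ((continuous_id.tendsto (0 : ℝ)).isBigO_one ℝ)))
    rw [pow_succ]
    refine mul_dvd_mul_left _ (base q ?_)
    have := (h.mono (nhdsWithin_le_nhds (s := {0}ᶜ))).tendsto_div_nhds_zero
    refine this.congr' ?_
    filter_upwards [self_mem_nhdsWithin] with t ht
    have : t ≠ 0 := ht
    simp
    field_simp

lemma aux_one (h : ℝ → ℝ) (N : ℕ) (hh : ContDiffAt ℝ (⊤ : ℕ∞) h 0)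
    (hz : ∀ m ≤ N, iteratedDeriv m h 0 = 0) : h =o[𝓝 0] fun t => t ^ N := by
  obtain ⟨u, hu, hc⟩ := (hh.of_le (m := N) (by exact_mod_cast le_top)).contDiffOn (m := N) le_rfl (by simp)
  obtain ⟨r, hr, hb⟩ := Metric.mem_nhds_iff.1 (by simpa using hu : u ∈ 𝓝 (0:ℝ))
  have h0 : (0:ℝ) ∈ Metric.ball (0:ℝ) r := by simpa
  have := taylor_isLittleO (convex_ball (0:ℝ) r) h0 (hc.mono hb)
  rw [Metric.isOpen_ball.nhdsWithin_eq h0] at this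
  refine this.congr ?_ (by simp)
  intro x
  rw [taylor_within_apply, Finset.sum_eq_zero, sub_zero]
  intro k hk
  rw [iteratedDerivWithin_of_isOpen Metric.isOpen_ball h0, hz k (by simpa [Nat.lt_succ_iff] using hk)]
  simp

/-- exponents -/
def ee17 : Fin 5 → ℕ := ![4, 5, 6, 7, 11]

/-- basis vectors -/
def vv17 (n : ℕ) (hn : 4 ≤ n) : Fin 5 → (Fin (2*n) → ℝ) :=
  ![Pi.single ⟨0, by omega⟩ 1, Pi.single ⟨2, by omega⟩ 1, Pi.single ⟨4, by omega⟩ 1,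
    Pi.single ⟨6, by omega⟩ 1, Pi.single ⟨1, by omega⟩ 1]

lemma f17_eq (n : ℕ) (hn : 4 ≤ n) (t : ℝ) :
    f17 n t = ∑ j, t ^ (ee17 j) • vv17 n hn j := by
  funext ⟨i, hi⟩
  simp only [f17, padTo, ee17, vv17, Fin.sum_univ_five]
  by_cases h : i < 8
  · simp only [h, dif_pos]
    interval_cases i <;> simp [Pi.single_apply]
  · simp only [h, dif_neg, not_false_eq_true]
    have : i ≠ 0 ∧ i ≠ 1 ∧ i ≠ 2 ∧ i ≠ 4 ∧ i ≠ 6 := by omega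
    simp [Pi.single_apply, this]

/-- the form as a continuous bilinear map -/
def omegaL (n : ℕ) : (Fin (2*n) → ℝ) →L[ℝ] (Fin (2*n) → ℝ) →L[ℝ] ℝ :=
  ∑ i : Fin n,
    ((ContinuousLinearMap.proj (R := ℝ) (φ := fun _ : Fin (2*n) => ℝ)
        (⟨2*i.val, by have := i.isLt; omega⟩ : Fin (2*n))).smulRight
      (ContinuousLinearMap.proj (R := ℝ) (φ := fun _ : Fin (2*n) => ℝ)
        (⟨2*i.val+1, by have := i.isLt; omega⟩ : Fin (2*n)))
    - (ContinuousLinearMap.proj (R := ℝ) (φ := fun _ : Fin (2*n) => ℝ)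
        (⟨2*i.val+1, by have := i.isLt; omega⟩ : Fin (2*n))).smulRight
      (ContinuousLinearMap.proj (R := ℝ) (φ := fun _ : Fin (2*n) => ℝ)
        (⟨2*i.val, by have := i.isLt; omega⟩ : Fin (2*n))))

lemma omegaL_apply (n : ℕ) (u v : Fin (2*n) → ℝ) : omegaL n u v = omega0 n u v := by
  simp [omegaL, omega0, ContinuousLinearMap.sum_apply]

lemma omega0_swap (n : ℕ) (u v : Fin (2*n) → ℝ) : omega0 n u v = - omega0 n v u := by
  rw [omega0, omega0, ← Finset.sum_neg_distrib]
  exact Finset.sum_congr rfl fun i _ => by ring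

lemma omega0_pq (n : ℕ) (hn : 4 ≤ n) : omega0 n (vv17 n hn 0) (vv17 n hn 4) = 1 := by
  rw [omega0, Finset.sum_eq_single ⟨0, by omega⟩]
  · simp [vv17]
  · intro i _ hi
    have : i.val ≠ 0 := fun h => hi (Fin.ext h)
    simp [vv17, Pi.single_apply, this]
  · simp

lemma partA (n : ℕ) (hn : 4 ≤ n) (H : (Fin (2*n) → ℝ) → (Fin n → ℝ)) (hH : IsLagrangianMap n H)
    (hz : ∀ i : Fin n, ∀ m ≤ 11, iteratedDeriv m (fun t : ℝ => H (f17 n t) i) 0 = 0) : False := by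
  obtain ⟨h0, ⟨U, hU, hc⟩, hsurj, hL⟩ := hH
  have hC : ContDiffAt ℝ (⊤ : ℕ∞) H 0 := hc.contDiffAt hU
  have hC3 : ContDiffAt ℝ 3 H 0 := by
    have hN : ∀ N : ℕ, ContDiffAt ℝ N H 0 := fun N => hC.of_le (by exact_mod_cast le_top)
    exact hN 3
  have hs : IsSymmSndFDerivAt ℝ H 0 := hC3.isSymmSndFDerivAt (by simp; norm_num)
  have hT := aux_taylor_s19 H h0 hC3
  obtain ⟨R, hR⟩ := (fderiv ℝ H 0).toLinearMap.exists_rightInverse_of_surjective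
    (LinearMap.range_eq_top.2 hsurj)
  have hR' : ∀ y, fderiv ℝ H 0 (LinearMap.toContinuousLinearMap R y) = y := fun y => by
    simpa using congrArg (fun T => T y) hR
  obtain ⟨Q, hQ1, hQ2⟩ := aux_Q H h0 hC3 _ hR' (omegaL n) (by simpa only [omegaL_apply] using hL)
  have hL0 := hL.self_of_nhds h0
  set A := fderiv ℝ H 0 with hA
  set B := fderiv ℝ (fderiv ℝ H) 0 with hB
  have hBs : ∀ u v, B u v = B v u := fun u v => hs u v
  set v := vv17 n hn with hv
  have hf0 : f17 n 0 = 0 := by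
    rw [f17_eq n hn]; simp [ee17, Fin.sum_univ_five]
  have hfc : ContDiff ℝ (⊤ : ℕ∞) (f17 n) := by
    rw [show f17 n = fun t => ∑ j, t ^ (ee17 j) • v j from funext (f17_eq n hn)]
    fun_prop
  have hfO : (f17 n) =O[𝓝 0] fun t : ℝ => t ^ 4 := by
    rw [show f17 n = fun t => ∑ j, t ^ (ee17 j) • v j from funext (f17_eq n hn)]
    refine Asymptotics.IsBigO.fun_sum fun j _ => ?_
    have h4 : 4 ≤ ee17 j := by fin_cases j <;> simp [ee17]
    have hb : (fun t : ℝ => t ^ (ee17 j - 4) • v j) =O[𝓝 0] fun _ : ℝ => (1 : ℝ) := by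
      have hcont : Continuous (fun t : ℝ => t ^ (ee17 j - 4) • v j) := by fun_prop
      exact (hcont.tendsto 0).isBigO_one ℝ
    refine ((Asymptotics.isBigO_refl (fun t : ℝ => t ^ 4) (𝓝 0)).smul hb).congr ?_ (by simp)
    intro t
    rw [smul_smul, ← pow_add, Nat.add_sub_cancel' h4]
  have hft : Tendsto (f17 n) (𝓝 0) (𝓝 0) := by
    simpa [hf0] using hfc.continuous.tendsto 0
  have hT2 : (fun t => H (f17 n t) - A (f17 n t) - (1/2 : ℝ) • B (f17 n t) (f17 n t))
      =o[𝓝 0] fun t : ℝ => t ^ 11 := by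
    refine (hT.comp_tendsto hft).trans_isLittleO ?_
    have h12 : (fun t => ‖f17 n t‖ ^ 3) =O[𝓝 0] fun t : ℝ => (t ^ 4) ^ 3 := hfO.norm_left.pow 3
    refine h12.trans_isLittleO ?_
    simp only [← pow_mul]
    exact Asymptotics.isLittleO_pow_pow (by norm_num)
  have hpoly : ∀ i : Fin n, ∀ m < 12,
      (∑ j, Polynomial.C (A (v j) i) * Polynomial.X ^ (ee17 j) +
       ∑ j, ∑ k, Polynomial.C ((1/2) * B (v j) (v k) i) * Polynomial.X ^ (ee17 j + ee17 k) :
        Polynomial ℝ).coeff m = 0 := by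
    intro i
    rw [← Polynomial.X_pow_dvd_iff]
    refine aux_poly 11 _ ?_
    have hi : (fun t => H (f17 n t) i) =o[𝓝 0] fun t : ℝ => t ^ 11 := by
      refine aux_one _ 11 ?_ (hz i)
      have : ContDiffAt ℝ (⊤ : ℕ∞) (fun t => H (f17 n t)) 0 :=
        ContDiffAt.comp (0 : ℝ) (by rw [hf0]; exact hC) hfc.contDiffAt
      exact contDiffAt_pi.1 this i
    have hTi := (Asymptotics.isLittleO_pi.1 hT2) i
    refine (hi.sub hTi).congr_left fun t => ?_
    rw [f17_eq n hn t, ← hv]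
    simp only [map_sum, map_smul, ContinuousLinearMap.sum_apply, ContinuousLinearMap.smul_apply,
      Polynomial.eval_add, Polynomial.eval_finsetSum, Polynomial.eval_mul, Polynomial.eval_C,
      Polynomial.eval_pow, Polynomial.eval_X, Pi.sub_apply, Pi.smul_apply, Finset.sum_apply,
      smul_eq_mul, Finset.mul_sum, pow_add]
    rw [sub_sub, sub_sub_cancel]
    congr 1
    · exact Finset.sum_congr rfl fun j _ => by ring
    · rw [Finset.sum_comm]
      exact Finset.sum_congr rfl fun j _ => Finset.sum_congr rfl fun k _ => by ring
  simp only [Polynomial.coeff_add, Polynomial.finset_sum_coeff, Polynomial.coeff_C_mul,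
    Polynomial.coeff_X_pow, Fin.sum_univ_five, ee17] at hpoly
  have A0 : A (v 0) = 0 := by ext i; simpa using hpoly i 4 (by norm_num)
  have A1 : A (v 1) = 0 := by ext i; simpa using hpoly i 5 (by norm_num)
  have A2 : A (v 2) = 0 := by ext i; simpa using hpoly i 6 (by norm_num)
  have A3 : A (v 3) = 0 := by ext i; simpa using hpoly i 7 (by norm_num)
  have B00 : B (v 0) (v 0) = 0 := by ext i; simpa using hpoly i 8 (by norm_num)
  have B10 : B (v 1) (v 0) = 0 := by
    ext i
    have := hpoly i 9 (by norm_num)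
    simp [hBs (v 0) (v 1)] at this
    simpa using (by linarith : B (v 1) (v 0) i = 0)
  have B11 : A (v 4) = - B (v 0) (v 3) - B (v 1) (v 2) := by
    ext i
    have := hpoly i 11 (by norm_num)
    simp [hBs (v 3) (v 0), hBs (v 2) (v 1)] at this
    simp
    linarith
  have k1 := hQ2 (v 0) (v 3) (v 0) A0 A3 A0
  have k2 := hQ2 (v 0) (v 2) (v 1) A0 A2 A1
  have z1 : A (Q (v 0) (v 0)) = 0 := by rw [hQ1, B00, neg_zero]
  have z2 : A (Q (v 1) (v 0)) = 0 := by rw [hQ1, B10, neg_zero]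
  have w1 : omegaL n (Q (v 0) (v 0)) (v 3) = 0 := by rw [omegaL_apply]; exact hL0 _ _ z1 A3
  have w2 : omegaL n (Q (v 1) (v 0)) (v 2) = 0 := by rw [omegaL_apply]; exact hL0 _ _ z2 A2
  have z3 : A (v 4 - Q (v 0) (v 3) - Q (v 1) (v 2)) = 0 := by
    rw [map_sub, map_sub, hQ1, hQ1, B11]; abel
  have w3 : omegaL n (v 0) (v 4 - Q (v 0) (v 3) - Q (v 1) (v 2)) = 0 := by
    rw [omegaL_apply]; exact hL0 _ _ A0 z3
  rw [map_sub, map_sub, omegaL_apply n (v 0) (v 4), omega0_pq] at w3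
  linarith

lemma partB (n : ℕ) (hn : 4 ≤ n) :
    ∃ H : (Fin (2*n) → ℝ) → (Fin n → ℝ), IsLagrangianMap n H ∧
      (∀ i : Fin n, ∀ m < 11, iteratedDeriv m (fun t : ℝ => H (f17 n t) i) 0 = 0) ∧
      ∃ i : Fin n, iteratedDeriv 11 (fun t : ℝ => H (f17 n t) i) 0 ≠ 0 := by
  let L : (Fin (2*n) → ℝ) →L[ℝ] (Fin n → ℝ) := ContinuousLinearMap.pi fun i : Fin n =>
    ContinuousLinearMap.proj (R := ℝ) (φ := fun _ : Fin (2*n) => ℝ)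
      (⟨2*i.val+1, by have := i.isLt; omega⟩ : Fin (2*n))
  have hLa : ∀ x i, L x i = x ⟨2*i.val+1, by have := i.isLt; omega⟩ := fun x i => rfl
  have hcomp : ∀ i : Fin n, (fun t : ℝ => L (f17 n t) i) =
      if i.val = 0 then (fun t => t ^ 11) else fun _ => 0 := by
    intro i
    funext t
    rw [hLa]
    obtain ⟨i, hi⟩ := i
    simp only [f17, padTo]
    by_cases h : i < 4
    · interval_cases i <;> simp
    · have h1 : ¬ (2 * i + 1 < 8) := by omega
      have h2 : i ≠ 0 := by omega
      simp [h1, h2]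
  refine ⟨L, ⟨map_zero L, ⟨Set.univ, univ_mem, L.contDiff.contDiffOn⟩, ?_, ?_⟩, ?_, ?_⟩
  · rw [L.fderiv]
    intro y
    refine ⟨fun j => y ⟨j.val / 2, by have := j.isLt; omega⟩, ?_⟩
    funext i
    rw [hLa]
    congr 1
    ext
    simp; omega
  · refine Eventually.of_forall fun x _ u v hu hv => ?_
    rw [L.fderiv] at hu hv
    refine Finset.sum_eq_zero fun i _ => ?_
    have h1 := congrFun hu i
    have h2 := congrFun hv i
    rw [hLa] at h1 h2
    simp [h1, h2]
  · intro i m hm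
    rw [hcomp]
    split_ifs
    · rw [iteratedDeriv_pow, zero_pow (by omega), mul_zero]
    · simp [iteratedDeriv_const]
  · refine ⟨⟨0, by omega⟩, ?_⟩
    rw [hcomp]
    rw [if_pos rfl, iteratedDeriv_pow]
    simp [Nat.descFactorial]

/-- The curve `f(t) = (t⁴, t¹¹, t⁵, 0, t⁶, 0, t⁷, 0, …, 0)` in `ℝ^{2n}`, `n ≥ 4`, has
Lagrangian tangency order `11`: (a) for every Lagrangian defining map `H` some
component of `H ∘ f` vanishes at `0` to order at most `11`, and (b) there is a
Lagrangian defining map all of whose components composed with `f` vanish to order at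
least `11`, one of them to order exactly `11`. -/
theorem lagrangian_tangency_order_row17_4567 (n : ℕ) (hn : 4 ≤ n) :
    (∀ H : (Fin (2*n) → ℝ) → (Fin n → ℝ), IsLagrangianMap n H →
      ∃ i : Fin n, ∃ m ≤ 11,
        iteratedDeriv m (fun t : ℝ => H (f17 n t) i) 0 ≠ 0) ∧
    (∃ H : (Fin (2*n) → ℝ) → (Fin n → ℝ), IsLagrangianMap n H ∧
      (∀ i : Fin n, ∀ m < 11, iteratedDeriv m (fun t : ℝ => H (f17 n t) i) 0 = 0) ∧
      ∃ i : Fin n, iteratedDeriv 11 (fun t : ℝ => H (f17 n t) i) 0 ≠ 0) := by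
  refine ⟨fun H hH => ?_, partB n hn⟩
  by_contra hcon
  push Not at hcon
  exact partA n hn H hH hcon
end
end
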